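/- arXiv:1305.6420 — 13 statements merged into one kernel-verified Lean document; each statement's English description precedes it below -/
import Mathlib

section
/- Let {X_i}_{i∈I} and {Y_j}_{j∈J} be families of Banach spaces over ℝ, let X = [⊕_{i∈I} X_i]_{ℓ1} be the ℓ1-sum of {X_i} and let Y = [⊕_{j∈J} Y_j]_{ℓ∞} be the ℓ∞-sum of {Y_j}. If the pair (X,Y) has the Bishop–Phelps–Bollobás property with a function η : (0,1) → (0,∞), then for every i ∈ I and every j ∈ J the pair (X_i, Y_j) also has the Bishop–Phelps–Bollobás property with the same function η. -/
open scoped ENNReal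

/-- A pair `(X, Y)` of normed spaces has the Bishop–Phelps–Bollobás property with the
function `η : (0,1) → (0,∞)` (encoded as `η : ℝ → ℝ`, relevant only on `(0,1)`). -/
def BPBpWith (X Y : Type*) [NormedAddCommGroup X] [NormedSpace ℝ X]
    [NormedAddCommGroup Y] [NormedSpace ℝ Y] (η : ℝ → ℝ) : Prop :=
  ∀ ε ∈ Set.Ioo (0 : ℝ) 1, ∀ (T₀ : X →L[ℝ] Y) (x₀ : X),
    ‖T₀‖ = 1 → ‖x₀‖ = 1 → 1 - η ε < ‖T₀ x₀‖ →
      ∃ (S : X →L[ℝ] Y) (x : X),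
        ‖x‖ = 1 ∧ ‖S‖ = 1 ∧ ‖S x‖ = 1 ∧ ‖x - x₀‖ < ε ∧ ‖S - T₀‖ < ε

/-- If the pair `([⊕ᵢ Xᵢ]_{ℓ₁}, [⊕ⱼ Yⱼ]_{ℓ∞})` has the BPBp with a function `η`, then every
pair `(Xᵢ, Yⱼ)` has the BPBp with the same function `η`. -/
theorem bpbp_of_l1_sum_domain_linfty_sum_range
    {I J : Type*} (X : I → Type*) (Y : J → Type*)
    [∀ i, NormedAddCommGroup (X i)] [∀ i, NormedSpace ℝ (X i)] [∀ i, CompleteSpace (X i)]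
    [∀ j, NormedAddCommGroup (Y j)] [∀ j, NormedSpace ℝ (Y j)] [∀ j, CompleteSpace (Y j)]
    (η : ℝ → ℝ) (hη : ∀ ε ∈ Set.Ioo (0 : ℝ) 1, 0 < η ε)
    (h : BPBpWith (lp (fun i => X i) 1) (lp (fun j => Y j) ∞) η) :
    ∀ (i : I) (j : J), BPBpWith (X i) (Y j) η := by
  classical
  intro i j ε hε T₀ x₀ hT hx₀ hT₀
  let T : lp (fun i => X i) 1 →L[ℝ] lp (fun j => Y j) ∞ :=
    (lp.singleContinuousLinearMap ℝ Y ∞ j).comp (T₀.comp (lp.evalCLM ℝ X 1 i))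
  have hTa : ∀ z : lp (fun i => X i) 1, T z = lp.single ∞ j (T₀ (z i)) := fun z => rfl
  have hTs : ∀ a : X i, T (lp.single 1 i a) = lp.single ∞ j (T₀ a) := by
    intro a
    rw [hTa, lp.single_apply_self]
  have n1 : ∀ a : X i, ‖(lp.single 1 i a : lp (fun i => X i) 1)‖ = ‖a‖ :=
    fun a => lp.norm_single one_pos i a
  have ninf : ∀ a : Y j, ‖(lp.single ∞ j a : lp (fun j => Y j) ∞)‖ = ‖a‖ :=
    fun a => lp.norm_single ENNReal.zero_lt_top j a
  have e1 : ∀ (z : lp (fun i => X i) 1) k, ‖z k‖ ≤ ‖z‖ :=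
    fun z k => lp.norm_apply_le_norm one_ne_zero z k
  have einf : ∀ (z : lp (fun j => Y j) ∞) k, ‖z k‖ ≤ ‖z‖ :=
    fun z k => lp.norm_apply_le_norm ENNReal.top_ne_zero z k
  have hTn : ‖T‖ = 1 := by
    apply le_antisymm
    · refine T.opNorm_le_bound zero_le_one fun z => ?_
      rw [hTa, ninf]
      have h1 := T₀.le_opNorm (z i)
      rw [hT] at h1
      linarith [e1 z i]
    · rw [← hT]
      refine T₀.opNorm_le_bound (norm_nonneg _) fun a => ?_
      have h1 := T.le_opNorm (lp.single 1 i a)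
      rwa [hTs, ninf, n1] at h1
  obtain ⟨S, x, hx, hS, hSx, hxx, hST⟩ := h ε hε T (lp.single 1 i x₀) hTn
    (by rw [n1, hx₀]) (by rw [hTs, ninf]; exact hT₀)
  have hδ : ‖S - T‖ < 1 := hST.trans hε.2
  have hδ0 : 0 ≤ ‖S - T‖ := norm_nonneg _
  have hD : ∀ z, ‖S z - T z‖ ≤ ‖S - T‖ * ‖z‖ := fun z => (S - T).le_opNorm z
  -- the j-th coordinate of `S x` has norm one
  have hj : 1 ≤ ‖S x j‖ := by
    by_contra hlt
    push Not at hlt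
    have h1 : ‖S x‖ ≤ max ‖S x j‖ ‖S - T‖ := by
      refine lp.norm_le_of_forall_le (le_max_of_le_right hδ0) fun k => ?_
      by_cases hk : k = j
      · subst hk
        exact le_max_left _ _
      · refine le_max_of_le_right ?_
        have h2 := (einf (S x - T x) k).trans (hD x)
        rw [lp.coeFn_sub, Pi.sub_apply, hTa, lp.single_apply_ne _ _ _ hk, sub_zero, hx,
          mul_one] at h2
        exact h2
    rw [hSx] at h1
    exact absurd h1 (not_le.mpr (max_lt hlt hδ))
  -- the norm of the rest of `x`
  have hrest : ‖x - lp.single 1 i (x i)‖ = 1 - ‖x i‖ := by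
    have h1 := lp.norm_compl_sum_single (p := 1) (by simp) x {i}
    simpa [hx] using h1
  have hTrest : T (x - lp.single 1 i (x i)) = 0 := by
    rw [map_sub, hTs, hTa, sub_self]
  have hSrest : ‖S (x - lp.single 1 i (x i))‖ ≤ ‖S - T‖ * (1 - ‖x i‖) := by
    have h1 := hD (x - lp.single 1 i (x i))
    rwa [hTrest, sub_zero, hrest] at h1
  have hSb : ∀ a : X i, ‖S (lp.single 1 i a) j‖ ≤ ‖a‖ := by
    intro a
    have h1 := S.le_opNorm (lp.single 1 i a)
    rw [hS, n1, one_mul] at h1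
    exact (einf _ j).trans h1
  have hdec : S x j = S (lp.single 1 i (x i)) j + S (x - lp.single 1 i (x i)) j := by
    rw [← Pi.add_apply, ← lp.coeFn_add, ← map_add, add_sub_cancel]
  have hxi : ‖x i‖ = 1 := by
    apply le_antisymm (hx ▸ e1 x i)
    have h1 := norm_add_le (S (lp.single 1 i (x i)) j) (S (x - lp.single 1 i (x i)) j)
    rw [← hdec] at h1
    have h2 := (einf _ j).trans hSrest
    have h3 := hSb (x i)
    by_contra hlt
    push Not at hlt
    nlinarith
  have hxe : S (x - lp.single 1 i (x i)) = 0 := by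
    rw [hxi, sub_self, mul_zero] at hSrest
    exact norm_le_zero_iff.mp hSrest
  let S' : X i →L[ℝ] Y j :=
    (lp.evalCLM ℝ Y ∞ j).comp (S.comp (lp.singleContinuousLinearMap ℝ X 1 i))
  have hS'a : ∀ a, S' a = S (lp.single 1 i a) j := fun a => rfl
  have hS'le : ‖S'‖ ≤ 1 := by
    refine S'.opNorm_le_bound zero_le_one fun a => ?_
    rw [one_mul, hS'a]
    exact hSb a
  have hS'x : 1 ≤ ‖S' (x i)‖ := by
    rw [hxe, lp.coeFn_zero, Pi.zero_apply, add_zero] at hdec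
    rw [hS'a, ← hdec]
    exact hj
  have hS'x2 : ‖S' (x i)‖ ≤ ‖S'‖ := by
    have h1 := S'.le_opNorm (x i)
    rwa [hxi, mul_one] at h1
  refine ⟨S', x i, hxi, by linarith, by linarith, ?_, ?_⟩
  · refine lt_of_le_of_lt ?_ hxx
    have h1 := e1 (x - lp.single 1 i x₀) i
    rwa [lp.coeFn_sub, Pi.sub_apply, lp.single_apply_self] at h1
  · refine lt_of_le_of_lt ?_ hST
    refine ContinuousLinearMap.opNorm_le_bound _ hδ0 fun a => ?_
    have h1 := (einf _ j).trans (hD (lp.single 1 i a))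
    rw [lp.coeFn_sub, Pi.sub_apply, hTs, lp.single_apply_self, n1] at h1
    exact h1
end

section
/- Let X be a Banach space over ℝ and let {Y_j}_{j∈J} be a family of Banach spaces over ℝ. Then the pair (X, [⊕_{j∈J} Y_j]_{ℓ∞}) has the Bishop–Phelps–Bollobás property if and only if there exists a function η : (0,1) → (0,∞) such that for every j ∈ J the pair (X, Y_j) has the Bishop–Phelps–Bollobás property with the (common) function η. -/
open scoped ENNReal

/-- The pair `(X, Y)` has the Bishop–Phelps–Bollobás property. -/
def HasBPBp (X Y : Type*) [NormedAddCommGroup X] [NormedSpace ℝ X]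
    [NormedAddCommGroup Y] [NormedSpace ℝ Y] : Prop :=
  ∃ η : ℝ → ℝ, (∀ ε ∈ Set.Ioo (0 : ℝ) 1, 0 < η ε) ∧ BPBpWith X Y η

section Helpers

variable {J : Type*} {Y : J → Type*} [∀ j, NormedAddCommGroup (Y j)] [∀ j, NormedSpace ℝ (Y j)]

/-- Coordinate projection on the sup-sum. -/
noncomputable def bpbProj (j : J) : lp (fun j => Y j) ∞ →L[ℝ] Y j :=
  LinearMap.mkContinuous
    { toFun := fun f => f j
      map_add' := fun _ _ => rfl
      map_smul' := fun _ _ => rfl } 1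
    (fun f => by
      rw [one_mul]
      exact lp.norm_apply_le_norm ENNReal.top_ne_zero f j)

theorem bpbProj_apply (j : J) (f : lp (fun j => Y j) ∞) : bpbProj j f = f j := rfl

open Classical in
theorem norm_bpb_single_le (j : J) (a : Y j) :
    ‖(lp.single ∞ j a : lp (fun j => Y j) ∞)‖ ≤ ‖a‖ := by
  refine lp.norm_le_of_forall_le (norm_nonneg _) fun i => ?_
  by_cases h : i = j
  · subst h
    rw [lp.single_apply_self]
  · rw [lp.single_apply_ne _ _ _ h, norm_zero]
    exact norm_nonneg _

open Classical in
/-- Coordinate inclusion into the sup-sum. -/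
noncomputable def bpbInj (j : J) : Y j →L[ℝ] lp (fun j => Y j) ∞ :=
  LinearMap.mkContinuous (lp.lsingle (𝕜 := ℝ) ∞ j) 1
    (fun a => by
      rw [one_mul]
      exact norm_bpb_single_le j a)

theorem bpbInj_self (j : J) (a : Y j) : bpbInj j a j = a := by
  classical
  exact lp.single_apply_self _ _ _

theorem bpbInj_ne (j : J) (a : Y j) {i : J} (h : i ≠ j) : bpbInj j a i = 0 := by
  classical
  exact lp.single_apply_ne _ _ _ h

theorem norm_bpbInj_le (j : J) (a : Y j) : ‖bpbInj j a‖ ≤ ‖a‖ :=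
  norm_bpb_single_le j a

variable {X : Type*} [NormedAddCommGroup X] [NormedSpace ℝ X]

theorem norm_coord_le (T : X →L[ℝ] lp (fun j => Y j) ∞) (j : J) (x : X) :
    ‖T x j‖ ≤ ‖T‖ * ‖x‖ :=
  (lp.norm_apply_le_norm ENNReal.top_ne_zero (T x) j).trans (T.le_opNorm x)

theorem norm_proj_comp_le (T : X →L[ℝ] lp (fun j => Y j) ∞) (j : J) :
    ‖(bpbProj j).comp T‖ ≤ ‖T‖ :=
  ContinuousLinearMap.opNorm_le_bound _ (norm_nonneg _) fun x => norm_coord_le T j x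

theorem bpb_forward (η : ℝ → ℝ) (h : BPBpWith X (lp (fun j => Y j) ∞) η) (j : J) :
    BPBpWith X (Y j) η := by
  intro ε hε T₀ x₀ hT hx hη
  have happ : ∀ x, ‖(bpbInj j).comp T₀ x‖ = ‖T₀ x‖ := by
    intro x
    refine le_antisymm (norm_bpbInj_le j (T₀ x)) ?_
    have := lp.norm_apply_le_norm ENNReal.top_ne_zero (bpbInj (Y := Y) j (T₀ x)) j
    rwa [bpbInj_self] at this
  have hnorm : ‖(bpbInj (Y := Y) j).comp T₀‖ = 1 := by
    rw [← hT]
    apply le_antisymm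
    · refine ContinuousLinearMap.opNorm_le_bound _ (norm_nonneg _) fun x => ?_
      rw [happ]; exact T₀.le_opNorm x
    · refine ContinuousLinearMap.opNorm_le_bound _ (norm_nonneg _) fun x => ?_
      rw [← happ]; exact ContinuousLinearMap.le_opNorm _ x
  obtain ⟨S, x, hx1, hS, hSx, hxx, hST⟩ := h ε hε ((bpbInj j).comp T₀) x₀ hnorm hx
    (by rw [happ]; exact hη)
  have hle : ‖(bpbProj j).comp S‖ ≤ 1 := hS ▸ norm_proj_comp_le S j
  have hSj : ‖S x j‖ = 1 := by
    have h1 : ‖S x j‖ ≤ 1 := by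
      have := norm_coord_le S j x
      rwa [hS, hx1, one_mul] at this
    by_contra hne
    have hlt : ‖S x j‖ < 1 := lt_of_le_of_ne h1 hne
    have : ‖S x‖ ≤ max ‖S x j‖ ‖S - (bpbInj j).comp T₀‖ := by
      refine lp.norm_le_of_forall_le ((norm_nonneg _).trans (le_max_left _ _)) fun i => ?_
      by_cases hij : i = j
      · subst hij; exact le_max_left _ _
      · refine le_trans ?_ (le_max_right _ _)
        have h2 := norm_coord_le (S - (bpbInj j).comp T₀) i x
        have h3 : (S - (bpbInj j).comp T₀) x i = S x i := by
          change S x i - bpbInj j (T₀ x) i = S x i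
          rw [bpbInj_ne j _ hij, sub_zero]
        rwa [h3, hx1, mul_one] at h2
    rw [hSx] at this
    exact absurd this (not_le.mpr (max_lt hlt (hST.trans hε.2)))
  refine ⟨(bpbProj j).comp S, x, hx1, le_antisymm hle ?_, hSj, hxx, ?_⟩
  · have := ((bpbProj j).comp S).le_opNorm x
    rw [hx1, mul_one] at this
    exact hSj ▸ this
  · refine lt_of_le_of_lt ?_ hST
    refine le_trans (le_of_eq ?_) (norm_proj_comp_le _ j)
    congr 1
    ext y
    change S y j - T₀ y = S y j - bpbInj j (T₀ y) j
    rw [bpbInj_self]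

theorem bpb_backward (η : ℝ → ℝ) (hpos : ∀ ε ∈ Set.Ioo (0 : ℝ) 1, 0 < η ε)
    (h : ∀ j, BPBpWith X (Y j) η) :
    BPBpWith X (lp (fun j => Y j) ∞) (fun ε => min (η (ε / 2)) (ε / 2)) := by
  intro ε hε T₀ x₀ hT hx hη
  obtain ⟨hε0, hε1⟩ := hε
  have hε2 : ε / 2 ∈ Set.Ioo (0 : ℝ) 1 := ⟨by linarith, by linarith⟩
  have hm1 := min_le_left (η (ε / 2)) (ε / 2)
  have hm2 := min_le_right (η (ε / 2)) (ε / 2)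
  simp only at hη
  set m := min (η (ε / 2)) (ε / 2) with hm
  obtain ⟨j, hj⟩ : ∃ j, 1 - m < ‖T₀ x₀ j‖ := by
    by_contra hcon
    push Not at hcon
    exact absurd (lp.norm_le_of_forall_le (by linarith) hcon) (not_le.mpr hη)
  set T := (bpbProj j).comp T₀ with hTdef
  have hTx : ‖T₀ x₀ j‖ ≤ ‖T‖ := by
    have := T.le_opNorm x₀
    rwa [hx, mul_one] at this
  have hTle : ‖T‖ ≤ 1 := hT ▸ norm_proj_comp_le T₀ j
  have hTgt : 1 - m < ‖T‖ := hj.trans_le hTx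
  have hT0 : 0 < ‖T‖ := by linarith
  have hinv : 1 ≤ ‖T‖⁻¹ := (one_le_inv₀ hT0).2 hTle
  have hn : ‖‖T‖⁻¹ • T‖ = 1 := by
    rw [norm_smul, norm_inv, norm_norm, inv_mul_cancel₀ hT0.ne']
  have hdiff : ‖‖T‖⁻¹ • T - T‖ = 1 - ‖T‖ := by
    have : ‖T‖⁻¹ • T - T = (‖T‖⁻¹ - 1) • T := by rw [sub_smul, one_smul]
    rw [this, norm_smul, Real.norm_of_nonneg (by linarith), sub_mul, inv_mul_cancel₀ hT0.ne',
      one_mul]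
  obtain ⟨R, x, hx1, hR, hRx, hxx, hRT⟩ := h j (ε / 2) hε2 (‖T‖⁻¹ • T) x₀ hn hx (by
    change _ < ‖‖T‖⁻¹ • (T₀ x₀ j)‖
    rw [norm_smul, norm_inv, norm_norm]
    have := mul_le_mul_of_nonneg_right hinv (norm_nonneg (T₀ x₀ j))
    linarith)
  have hRT' : ‖R - T‖ < ε := by
    have := norm_sub_le_norm_sub_add_norm_sub R (‖T‖⁻¹ • T) T
    linarith
  let S := T₀ + (bpbInj j).comp (R - T)
  have hSj : ∀ y, S y j = R y := by
    intro y
    change T₀ y j + bpbInj j (R y - T₀ y j) j = R y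
    rw [bpbInj_self]; abel
  have hSi : ∀ y i, i ≠ j → S y i = T₀ y i := by
    intro y i hi
    change T₀ y i + bpbInj j (R y - T₀ y j) i = T₀ y i
    rw [bpbInj_ne j _ hi, add_zero]
  have hSle : ∀ y, ‖S y‖ ≤ 1 * ‖y‖ := by
    intro y
    refine lp.norm_le_of_forall_le (by positivity) fun i => ?_
    by_cases hi : i = j
    · subst hi; rw [hSj, ← hR]; exact R.le_opNorm y
    · rw [hSi y i hi, ← hT]; exact norm_coord_le T₀ i y
  have hSx : ‖S x‖ = 1 := by
    apply le_antisymm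
    · simpa [hx1] using hSle x
    · have := lp.norm_apply_le_norm ENNReal.top_ne_zero (S x) j
      rwa [hSj, hRx] at this
  refine ⟨S, x, hx1, le_antisymm (ContinuousLinearMap.opNorm_le_bound _ zero_le_one hSle) ?_,
    hSx, by linarith, lt_of_le_of_lt ?_ hRT'⟩
  · have := S.le_opNorm x
    rwa [hx1, mul_one, hSx] at this
  · refine ContinuousLinearMap.opNorm_le_bound _ (norm_nonneg _) fun y => ?_
    have : (S - T₀) y = bpbInj j ((R - T) y) := by
      change T₀ y + bpbInj j ((R - T) y) - T₀ y = _
      abel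
    rw [this]
    exact (norm_bpbInj_le j _).trans ((R - T).le_opNorm y)

end Helpers

/-- The pair `(X, [⊕ⱼ Yⱼ]_{ℓ∞})` has the BPBp if and only if the pairs `(X, Yⱼ)` have the
BPBp with a common function `η`. -/
theorem hasBPBp_linfty_sum_range_iff
    {J : Type*} (X : Type*) (Y : J → Type*)
    [NormedAddCommGroup X] [NormedSpace ℝ X] [CompleteSpace X]
    [∀ j, NormedAddCommGroup (Y j)] [∀ j, NormedSpace ℝ (Y j)] [∀ j, CompleteSpace (Y j)] :
    HasBPBp X (lp (fun j => Y j) ∞) ↔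
      ∃ η : ℝ → ℝ, (∀ ε ∈ Set.Ioo (0 : ℝ) 1, 0 < η ε) ∧ ∀ j : J, BPBpWith X (Y j) η := by
  constructor
  · rintro ⟨η, hpos, h⟩
    exact ⟨η, hpos, bpb_forward η h⟩
  · rintro ⟨η, hpos, h⟩
    refine ⟨_, fun ε hε => ?_, bpb_backward η hpos h⟩
    have h0 := hε.1
    have h1 := hε.2
    exact lt_min (hpos _ ⟨by linarith, by linarith⟩) (by linarith)
end

section
/- Let X, Y₁, …, Y_m be Banach spaces over ℝ and let Y = Y₁ ⊕_∞ ⋯ ⊕_∞ Y_m be their ℓ∞-sum (the product Y₁ × ⋯ × Y_m with the maximum norm). Then the pair (X, Y) has the Bishop–Phelps–Bollobás property if and only if the pair (X, Y_j) has the Bishop–Phelps–Bollobás property for every j = 1, …, m. -/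
open scoped ENNReal

section Helpers

variable {m : ℕ} {X : Type*} {Y : Fin m → Type*}
    [NormedAddCommGroup X] [NormedSpace ℝ X]
    [∀ j, NormedAddCommGroup (Y j)] [∀ j, NormedSpace ℝ (Y j)]

lemma bpb_norm_le_iff (y : PiLp ∞ Y) {C : ℝ} (hC : 0 ≤ C) :
    ‖y‖ ≤ C ↔ ∀ i, ‖y i‖ ≤ C := by
  rw [← PiLp.norm_ofLp, pi_norm_le_iff_of_nonneg hC]

/-- The operator into the sup-sum with given coordinates. -/
noncomputable def bpbMk (T : ∀ j, X →L[ℝ] Y j) : X →L[ℝ] PiLp ∞ Y :=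
  ((PiLp.continuousLinearEquiv ∞ ℝ Y).symm : (∀ j, Y j) →L[ℝ] PiLp ∞ Y) ∘L
    ContinuousLinearMap.pi T

/-- The coordinate operator. -/
noncomputable def bpbCoord (T : X →L[ℝ] PiLp ∞ Y) (j : Fin m) : X →L[ℝ] Y j :=
  (PiLp.proj ∞ Y j : PiLp ∞ Y →L[ℝ] Y j) ∘L T

lemma bpbMk_apply (T : ∀ j, X →L[ℝ] Y j) (x : X) (j : Fin m) : bpbMk T x j = T j x := rfl

lemma bpbCoord_apply (T : X →L[ℝ] PiLp ∞ Y) (j : Fin m) (x : X) :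
    bpbCoord T j x = T x j := rfl

lemma bpb_coord_le (y : PiLp ∞ Y) (i : Fin m) : ‖y i‖ ≤ ‖y‖ :=
  (bpb_norm_le_iff y (norm_nonneg y)).1 le_rfl i

lemma bpb_op_le_iff (T : X →L[ℝ] PiLp ∞ Y) {C : ℝ} (hC : 0 ≤ C) :
    ‖T‖ ≤ C ↔ ∀ i, ‖bpbCoord T i‖ ≤ C := by
  constructor
  · intro h i
    refine ContinuousLinearMap.opNorm_le_bound _ hC fun x => ?_
    exact (bpb_coord_le (T x) i).trans (T.le_of_opNorm_le h x)
  · intro h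
    refine ContinuousLinearMap.opNorm_le_bound _ hC fun x => ?_
    rw [bpb_norm_le_iff _ (by positivity)]
    intro i
    exact (bpbCoord T i).le_of_opNorm_le (h i) x

lemma bpb_exists_lt (y : PiLp ∞ Y) {c : ℝ} (hc : 0 ≤ c) (h : c < ‖y‖) : ∃ i, c < ‖y i‖ := by
  by_contra! h'
  exact absurd ((bpb_norm_le_iff y hc).2 h') (not_le.2 h)

lemma bpb_forward_s4 (h : HasBPBp X (PiLp ∞ Y)) (j : Fin m) : HasBPBp X (Y j) := by
  classical
  obtain ⟨η, hη, h⟩ := h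
  refine ⟨η, hη, fun ε hε T x₀ hT hx₀ hTx => ?_⟩
  set T₀ : X →L[ℝ] PiLp ∞ Y := bpbMk (Function.update (fun _ => 0) j T) with hT₀
  have cj : bpbCoord T₀ j = T := by
    ext x
    rw [bpbCoord_apply, hT₀, bpbMk_apply, Function.update_self]
  have ci : ∀ i, i ≠ j → bpbCoord T₀ i = 0 := by
    intro i hi
    ext x
    rw [bpbCoord_apply, hT₀, bpbMk_apply, Function.update_of_ne hi]
  have hn : ‖T₀‖ = 1 := by
    apply le_antisymm
    · rw [bpb_op_le_iff _ zero_le_one]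
      intro i
      by_cases hi : i = j
      · subst hi; rw [cj, hT]
      · rw [ci i hi, norm_zero]; exact zero_le_one
    · have := (bpb_op_le_iff T₀ (norm_nonneg _)).1 le_rfl j
      rwa [cj, hT] at this
  have hTx' : 1 - η ε < ‖T₀ x₀‖ := by
    refine hTx.trans_le ?_
    rw [← cj, bpbCoord_apply]
    exact bpb_coord_le _ _
  obtain ⟨S, x, hx, hS, hSx, hxx, hST⟩ := h ε hε T₀ x₀ hn hx₀ hTx'
  have hcoord : ∀ i, ‖bpbCoord S i - bpbCoord T₀ i‖ ≤ ‖S - T₀‖ := by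
    intro i
    exact (bpb_op_le_iff (S - T₀) (norm_nonneg _)).1 le_rfl i
  have hSj : ‖bpbCoord S j‖ ≤ 1 := (bpb_op_le_iff S zero_le_one).1 hS.le j
  have hSjx : ‖bpbCoord S j x‖ ≤ ‖bpbCoord S j‖ := by
    simpa [hx] using (bpbCoord S j).le_opNorm x
  have key : 1 ≤ ‖bpbCoord S j x‖ := by
    by_contra! hlt
    obtain ⟨i, hi⟩ := bpb_exists_lt (S x) (c := max ε ‖bpbCoord S j x‖)
      (le_max_of_le_left hε.1.le) (by rw [hSx]; exact max_lt hε.2 hlt)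
    by_cases hij : i = j
    · subst hij
      exact absurd hi (not_lt.2 (le_max_right _ _))
    · have h1 := hcoord i
      rw [ci i hij, sub_zero] at h1
      have h2 : ‖bpbCoord S i x‖ ≤ ‖bpbCoord S i‖ := by
        simpa [hx] using (bpbCoord S i).le_opNorm x
      rw [bpbCoord_apply] at h2
      have := le_max_left ε ‖bpbCoord S j x‖
      linarith
  refine ⟨bpbCoord S j, x, hx, by linarith, by linarith, hxx, ?_⟩
  have := hcoord j
  rw [cj] at this
  linarith

lemma bpb_backward_s4 (h : ∀ j, HasBPBp X (Y j)) : HasBPBp X (PiLp ∞ Y) := by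
  classical
  choose η hη h using h
  have hex : ∀ ε ∈ Set.Ioo (0 : ℝ) 1, ∃ δ : ℝ, 0 < δ ∧ δ ≤ ε / 2 ∧ ∀ j, δ ≤ η j (ε / 2) := by
    intro ε hε
    have hε2 : ε / 2 ∈ Set.Ioo (0 : ℝ) 1 := ⟨by linarith [hε.1], by linarith [hε.1, hε.2]⟩
    let s : Finset ℝ := insert (ε / 2) (Finset.univ.image fun j => η j (ε / 2))
    have hs : s.Nonempty := Finset.insert_nonempty _ _
    refine ⟨s.min' hs, ?_, s.min'_le _ (Finset.mem_insert_self _ _), fun j => s.min'_le _ ?_⟩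
    · rw [Finset.lt_min'_iff]
      intro y hy
      rcases Finset.mem_insert.1 hy with rfl | hy
      · exact hε2.1
      · obtain ⟨j, -, rfl⟩ := Finset.mem_image.1 hy
        exact hη j _ hε2
    · exact Finset.mem_insert_of_mem (Finset.mem_image_of_mem _ (Finset.mem_univ j))
  choose! δ hδ0 hδε hδη using hex
  refine ⟨δ, hδ0, fun ε hε T x₀ hT hx₀ hTx => ?_⟩
  have hd0 := hδ0 ε hε
  have hdε := hδε ε hε
  have hε2 : ε / 2 ∈ Set.Ioo (0 : ℝ) 1 := ⟨by linarith [hε.1], by linarith [hε.1, hε.2]⟩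
  obtain ⟨j, hj⟩ := bpb_exists_lt (T x₀) (by linarith [hε.2]) hTx
  rw [← bpbCoord_apply] at hj
  set A := bpbCoord T j with hA
  have hA1 : ‖A‖ ≤ 1 := (bpb_op_le_iff T zero_le_one).1 hT.le j
  have hAx : ‖A x₀‖ ≤ ‖A‖ := by simpa [hx₀] using A.le_opNorm x₀
  have hA0 : 0 < ‖A‖ := by linarith [hε.2]
  have hB : ‖(‖A‖⁻¹ • A)‖ = 1 := by
    rw [norm_smul, norm_inv, norm_norm, inv_mul_cancel₀ hA0.ne']
  have hBx : 1 - η j (ε / 2) < ‖(‖A‖⁻¹ • A) x₀‖ := by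
    have h1 : ‖A x₀‖ ≤ ‖(‖A‖⁻¹ • A) x₀‖ := by
      rw [ContinuousLinearMap.smul_apply, norm_smul, norm_inv, norm_norm]
      exact le_mul_of_one_le_left (norm_nonneg _) ((one_le_inv₀ hA0).2 hA1)
    linarith [hδη ε hε j]
  obtain ⟨R, x, hx, hR, hRx, hxx, hRB⟩ := h j (ε / 2) hε2 _ x₀ hB hx₀ hBx
  have hBA : ‖‖A‖⁻¹ • A - A‖ = 1 - ‖A‖ := by
    have : ‖A‖⁻¹ • A - A = (‖A‖⁻¹ - 1) • A := by rw [sub_smul, one_smul]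
    rw [this, norm_smul, Real.norm_of_nonneg (by linarith [(one_le_inv₀ hA0).2 hA1]), sub_mul,
      inv_mul_cancel₀ hA0.ne', one_mul]
  have hRA : ‖R - A‖ < ε := by
    have := norm_sub_le_norm_sub_add_norm_sub R (‖A‖⁻¹ • A) A
    linarith
  set S : X →L[ℝ] PiLp ∞ Y := bpbMk (Function.update (bpbCoord T) j R) with hS
  have cj : bpbCoord S j = R := by
    ext x
    rw [bpbCoord_apply, hS, bpbMk_apply, Function.update_self]
  have ci : ∀ i, i ≠ j → bpbCoord S i = bpbCoord T i := by
    intro i hi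
    ext x
    rw [bpbCoord_apply, hS, bpbMk_apply, Function.update_of_ne hi]
  have hS1 : ‖S‖ ≤ 1 := by
    rw [bpb_op_le_iff _ zero_le_one]
    intro i
    by_cases hi : i = j
    · subst hi; rw [cj, hR]
    · rw [ci i hi]; exact (bpb_op_le_iff T zero_le_one).1 hT.le i
  have hSx : 1 ≤ ‖S x‖ := by
    rw [← hRx, ← cj, bpbCoord_apply]
    exact bpb_coord_le _ _
  have hSx' : ‖S x‖ ≤ ‖S‖ := by simpa [hx] using S.le_opNorm x
  refine ⟨S, x, hx, by linarith, by linarith, by linarith [hε.1], ?_⟩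
  refine lt_of_le_of_lt ((bpb_op_le_iff (S - T) (norm_nonneg (R - A))).2 fun i => ?_) hRA
  have e : bpbCoord (S - T) i = bpbCoord S i - bpbCoord T i := rfl
  rw [e]
  by_cases hi : i = j
  · subst hi; rw [cj]
  · rw [ci i hi, sub_self, norm_zero]; exact norm_nonneg _

end Helpers

/-- For finitely many Banach spaces `Y₁, …, Y_m`, the pair `(X, Y₁ ⊕_∞ ⋯ ⊕_∞ Y_m)` has the
BPBp if and only if every pair `(X, Yⱼ)` has the BPBp. -/
theorem hasBPBp_finite_linfty_sum_range_iff
    {m : ℕ} (X : Type*) (Y : Fin m → Type*)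
    [NormedAddCommGroup X] [NormedSpace ℝ X] [CompleteSpace X]
    [∀ j, NormedAddCommGroup (Y j)] [∀ j, NormedSpace ℝ (Y j)] [∀ j, CompleteSpace (Y j)] :
    HasBPBp X (PiLp ∞ Y) ↔ ∀ j, HasBPBp X (Y j) :=
  ⟨bpb_forward_s4, bpb_backward_s4⟩
end

section
/- Let {X_i}_{i∈I} be a family of Banach spaces over ℝ, let X = [⊕_{i∈I} X_i]_{ℓ∞} be their ℓ∞-sum, and let Y be a Banach space over ℝ. If the pair (X,Y) has the Bishop–Phelps–Bollobás property with a function η : (0,1) → (0,∞), then for every i ∈ I the pair (X_i, Y) also has the Bishop–Phelps–Bollobás property with the same function η. -/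
open scoped ENNReal

/-- If the pair `([⊕ᵢ Xᵢ]_{ℓ∞}, Y)` has the BPBp with a function `η`, then every pair
`(Xᵢ, Y)` has the BPBp with the same function `η`. -/
theorem bpbp_of_linfty_sum_domain
    {I : Type*} (X : I → Type*) (Y : Type*)
    [∀ i, NormedAddCommGroup (X i)] [∀ i, NormedSpace ℝ (X i)] [∀ i, CompleteSpace (X i)]
    [NormedAddCommGroup Y] [NormedSpace ℝ Y] [CompleteSpace Y]
    (η : ℝ → ℝ) (hη : ∀ ε ∈ Set.Ioo (0 : ℝ) 1, 0 < η ε)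
    (h : BPBpWith (lp (fun i => X i) ∞) Y η) :
    ∀ i : I, BPBpWith (X i) Y η := by
  classical
  intro i ε hε T₀ x₀ hT₀ hx₀ hTx
  have hε0 : 0 < ε := hε.1
  have hε1 : ε < 1 := hε.2
  let J : X i →L[ℝ] lp (fun i => X i) ∞ :=
    lp.singleContinuousLinearMap (𝕜 := ℝ) (E := fun i => X i) (p := ∞) i
  let P : lp (fun i => X i) ∞ →L[ℝ] X i := lp.evalCLM ℝ (fun i => X i) ∞ i
  have hJn : ∀ a, ‖J a‖ = ‖a‖ := fun a =>
    lp.norm_single (E := fun i => X i) (p := ∞) (by simp) i a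
  have hJi : ∀ a, (J a : ∀ i, X i) i = a := fun a =>
    lp.single_apply_self (E := fun i => X i) ∞ i a
  have hJne : ∀ a j, j ≠ i → (J a : ∀ i, X i) j = 0 := fun a j hj =>
    lp.single_apply_ne (E := fun i => X i) ∞ i a hj
  have hP : ∀ w : lp (fun i => X i) ∞, P w = w i := fun w => rfl
  have hw : ∀ (w : lp (fun i => X i) ∞) j, ‖w j‖ ≤ ‖w‖ := fun w j =>
    lp.norm_apply_le_norm (by simp) w j
  have hcomp : ∀ R : lp (fun i => X i) ∞ →L[ℝ] Y, ‖R.comp J‖ ≤ ‖R‖ := by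
    intro R
    refine ContinuousLinearMap.opNorm_le_bound _ (norm_nonneg _) fun a => ?_
    rw [← hJn a]
    exact R.le_opNorm (J a)
  have hPJ : (T₀.comp P).comp J = T₀ := by
    ext a
    simp [hP, hJi]
  have hT : ‖T₀.comp P‖ = 1 := by
    apply le_antisymm
    · refine ContinuousLinearMap.opNorm_le_bound _ zero_le_one fun w => ?_
      calc ‖T₀ (P w)‖ ≤ ‖T₀‖ * ‖P w‖ := T₀.le_opNorm _
        _ = 1 * ‖w i‖ := by rw [hT₀, hP]
        _ ≤ 1 * ‖w‖ := by rw [one_mul, one_mul]; exact hw w i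
    · have := hcomp (T₀.comp P)
      rwa [hPJ, hT₀] at this
  obtain ⟨S, w, hw1, hS, hSw, hwx, hST⟩ := h ε hε (T₀.comp P) (J x₀) hT
    (by rw [hJn, hx₀]) (by simpa [hP, hJi] using hTx)
  have hv : ‖J (w i) + ε⁻¹ • (w - J (w i))‖ ≤ 1 := by
    refine lp.norm_le_of_forall_le zero_le_one fun j => ?_
    rw [lp.coeFn_add, lp.coeFn_smul, lp.coeFn_sub, Pi.add_apply, Pi.smul_apply, Pi.sub_apply]
    by_cases hj : j = i
    · subst hj
      rw [hJi, sub_self, smul_zero, add_zero, ← hw1]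
      exact hw w j
    · rw [hJne _ j hj, zero_add, sub_zero, norm_smul, norm_inv, Real.norm_of_nonneg hε0.le,
        inv_mul_le_iff₀ hε0, mul_one]
      have := hw (w - J x₀) j
      rw [lp.coeFn_sub, Pi.sub_apply, hJne _ j hj, sub_zero] at this
      linarith
  have hdec : w = (1 - ε) • J (w i) + ε • (J (w i) + ε⁻¹ • (w - J (w i))) := by
    rw [smul_add, smul_smul, mul_inv_cancel₀ hε0.ne', one_smul, sub_smul, one_smul]
    abel
  have hge : 1 ≤ ‖S (J (w i))‖ := by
    have h1 : ‖S (J (w i) + ε⁻¹ • (w - J (w i)))‖ ≤ 1 := by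
      have := S.le_opNorm (J (w i) + ε⁻¹ • (w - J (w i)))
      rw [hS, one_mul] at this
      exact this.trans hv
    have h2 : ‖S w‖ ≤ (1 - ε) * ‖S (J (w i))‖
        + ε * ‖S (J (w i) + ε⁻¹ • (w - J (w i)))‖ := by
      conv_lhs => rw [hdec, map_add, map_smul, map_smul]
      refine (norm_add_le _ _).trans ?_
      rw [norm_smul, norm_smul, Real.norm_of_nonneg hε0.le,
        Real.norm_of_nonneg (sub_nonneg.2 hε1.le)]
    rw [hSw] at h2
    nlinarith
  have hle : ‖S (J (w i))‖ ≤ ‖w i‖ := by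
    have := S.le_opNorm (J (w i))
    rwa [hS, one_mul, hJn] at this
  have hwi : ‖w i‖ ≤ 1 := hw1 ▸ hw w i
  have hSc : ‖S.comp J‖ ≤ 1 := hS ▸ hcomp S
  have hxi : ‖w i‖ = 1 := by linarith
  refine ⟨S.comp J, w i, hxi, ?_, ?_, ?_, ?_⟩
  · apply le_antisymm hSc
    have := (S.comp J).le_opNorm (w i)
    rw [hxi, mul_one, ContinuousLinearMap.comp_apply] at this
    linarith
  · rw [ContinuousLinearMap.comp_apply]
    linarith
  · have := hw (w - J x₀) i
    rw [lp.coeFn_sub, Pi.sub_apply, hJi] at this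
    linarith
  · have := hcomp (S - T₀.comp P)
    rw [ContinuousLinearMap.sub_comp, hPJ] at this
    linarith
end

section
/- Let X₁ and X₂ be Banach spaces over ℝ, let X = X₁ ⊕_∞ X₂ (the product X₁ × X₂ with the maximum norm), and let Y be a Banach space over ℝ. If the pair (X,Y) has the Bishop–Phelps–Bollobás property with a function η : (0,1) → (0,∞), then the pair (X₁, Y) also has the Bishop–Phelps–Bollobás property with the same function η. -/
open scoped ENNReal

/-- If the pair `(X₁ ⊕_∞ X₂, Y)` has the BPBp with a function `η`, then the pair `(X₁, Y)`
has the BPBp with the same function `η`. -/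
theorem bpbp_of_linfty_prod_domain
    (X₁ X₂ Y : Type*)
    [NormedAddCommGroup X₁] [NormedSpace ℝ X₁] [CompleteSpace X₁]
    [NormedAddCommGroup X₂] [NormedSpace ℝ X₂] [CompleteSpace X₂]
    [NormedAddCommGroup Y] [NormedSpace ℝ Y] [CompleteSpace Y]
    (η : ℝ → ℝ) (hη : ∀ ε ∈ Set.Ioo (0 : ℝ) 1, 0 < η ε)
    (h : BPBpWith (WithLp ∞ (X₁ × X₂)) Y η) :
    BPBpWith X₁ Y η := by
  intro ε hε T₀ x₀ hT hx hTx
  have hn : ∀ z : WithLp ∞ (X₁ × X₂), ‖z‖ = max ‖z.fst‖ ‖z.snd‖ :=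
    fun z => WithLp.prod_norm_eq_sup z
  let e := WithLp.prodContinuousLinearEquiv ∞ ℝ X₁ X₂
  let J : X₁ →L[ℝ] WithLp ∞ (X₁ × X₂) :=
    (e.symm : (X₁ × X₂) →L[ℝ] WithLp ∞ (X₁ × X₂)).comp (ContinuousLinearMap.inl ℝ X₁ X₂)
  let P : WithLp ∞ (X₁ × X₂) →L[ℝ] X₁ :=
    (ContinuousLinearMap.fst ℝ X₁ X₂).comp (e : WithLp ∞ (X₁ × X₂) →L[ℝ] (X₁ × X₂))
  have hJf : ∀ u, (J u).fst = u := fun u => rfl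
  have hJs : ∀ u, (J u).snd = 0 := fun u => rfl
  have hP : ∀ z, P z = z.fst := fun z => rfl
  have hJn : ∀ u, ‖J u‖ = ‖u‖ := fun u => by rw [hn, hJf, hJs]; simp
  have hPJ : ∀ u, P (J u) = u := fun u => rfl
  have hPn : ∀ z, ‖P z‖ ≤ ‖z‖ := fun z => by rw [hP, hn]; exact le_max_left _ _
  have hcomp : ∀ R : WithLp ∞ (X₁ × X₂) →L[ℝ] Y, ‖R.comp J‖ ≤ ‖R‖ := fun R =>
    ContinuousLinearMap.opNorm_le_bound _ (norm_nonneg _) fun u => by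
      have := R.le_opNorm (J u)
      rwa [hJn] at this
  have hTP : (T₀.comp P).comp J = T₀ := by ext u; rfl
  have hTn : ‖T₀.comp P‖ = 1 := by
    apply le_antisymm
    · refine ContinuousLinearMap.opNorm_le_bound _ zero_le_one fun z => ?_
      have h1 := T₀.le_opNorm (P z)
      rw [hT] at h1
      have h2 := hPn z
      simp only [ContinuousLinearMap.comp_apply]
      linarith
    · have := hcomp (T₀.comp P)
      rwa [hTP, hT] at this
  obtain ⟨S, x, hx1, hS, hSx, hxx, hST⟩ := h ε hε (T₀.comp P) (J x₀) hTn
    (by rw [hJn, hx]) hTx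
  have hε0 := hε.1
  have hε1 := hε.2
  have hd : ‖x.fst - x₀‖ < ε ∧ ‖x.snd‖ < ε := by
    rw [hn, max_lt_iff] at hxx
    simpa [hJf, hJs] using hxx
  have hx2 : ‖x.fst‖ = 1 := by
    rw [hn] at hx1
    rcases max_choice ‖x.fst‖ ‖x.snd‖ with h1 | h1
    · rw [← h1, hx1]
    · linarith [hd.2]
  have hS1 : ‖S.comp J‖ ≤ 1 := hS ▸ hcomp S
  have hr : ‖x - (1 - ε) • J x.fst‖ ≤ ε := by
    rw [hn]
    apply max_le
    · have : (x - (1 - ε) • J x.fst).fst = ε • x.fst := by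
        simp only [WithLp.sub_fst, WithLp.smul_fst, hJf]
        module
      rw [this, norm_smul, hx2, Real.norm_of_nonneg hε0.le, mul_one]
    · have : (x - (1 - ε) • J x.fst).snd = x.snd := by
        simp only [WithLp.sub_snd, WithLp.smul_snd, hJs, smul_zero, sub_zero]
      rw [this]; exact hd.2.le
  have hlow : 1 ≤ ‖(S.comp J) x.fst‖ := by
    have h1 : S x = (1 - ε) • S (J x.fst) + S (x - (1 - ε) • J x.fst) := by
      rw [map_sub, map_smul]; abel
    have h2 := norm_add_le ((1 - ε) • S (J x.fst)) (S (x - (1 - ε) • J x.fst))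
    rw [← h1, hSx, norm_smul, Real.norm_of_nonneg (by linarith)] at h2
    have h3 := S.le_opNorm (x - (1 - ε) • J x.fst)
    rw [hS, one_mul] at h3
    change 1 ≤ ‖S (J x.fst)‖
    nlinarith
  have hup := (S.comp J).le_opNorm x.fst
  rw [hx2, mul_one] at hup
  refine ⟨S.comp J, x.fst, hx2, by linarith, by linarith, hd.1, ?_⟩
  have h4 : S.comp J - T₀ = (S - T₀.comp P).comp J := by ext u; rfl
  rw [h4]
  exact (hcomp _).trans_lt hST
end

section
/- Let {Y_j}_{j∈J} be a family of Banach spaces over ℝ, let Y = [⊕_{j∈J} Y_j]_{ℓ1} be their ℓ1-sum, and let X be a Banach space over ℝ. If the pair (X,Y) has the Bishop–Phelps–Bollobás property with a function η : (0,1) → (0,∞), then for every j ∈ J the pair (X, Y_j) also has the Bishop–Phelps–Bollobás property with the same function η. -/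
open scoped ENNReal

/-- If the pair `(X, [⊕ⱼ Yⱼ]_{ℓ₁})` has the BPBp with a function `η`, then every pair
`(X, Yⱼ)` has the BPBp with the same function `η`. -/
theorem bpbp_of_l1_sum_range
    {J : Type*} (X : Type*) (Y : J → Type*)
    [NormedAddCommGroup X] [NormedSpace ℝ X] [CompleteSpace X]
    [∀ j, NormedAddCommGroup (Y j)] [∀ j, NormedSpace ℝ (Y j)] [∀ j, CompleteSpace (Y j)]
    (η : ℝ → ℝ) (hη : ∀ ε ∈ Set.Ioo (0 : ℝ) 1, 0 < η ε)
    (h : BPBpWith X (lp (fun j => Y j) 1) η) :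
    ∀ j : J, BPBpWith X (Y j) η := by
  classical
  intro j ε hε T₀ x₀ hT hx hη'
  have hone : (1 : ℝ≥0∞).toReal = 1 := by simp
  -- norm decomposition
  have hdec : ∀ v : lp (fun j => Y j) 1, ‖v‖ = ‖v j‖ + ‖v - lp.single 1 j (v j)‖ := by
    intro v
    have := lp.norm_sub_norm_compl_sub_single (p := 1) (by simp) v {j}
    rw [hone] at this
    simp only [Real.rpow_one, Finset.sum_singleton] at this
    linarith
  have hsn : ∀ y : Y j, ‖(lp.single 1 j y : lp (fun j => Y j) 1)‖ = ‖y‖ := by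
    intro y
    exact lp.norm_single (by simp) j y
  let E : Y j →L[ℝ] lp (fun j => Y j) 1 := lp.singleContinuousLinearMap ℝ (fun j => Y j) 1 j
  have hE : ∀ y, E y = lp.single 1 j y := fun y => rfl
  have hTz : ∀ z, ‖T₀ z‖ ≤ ‖z‖ := fun z => by simpa [hT] using T₀.le_opNorm z
  have hEn : ‖E.comp T₀‖ = 1 := by
    rw [← hT]
    apply le_antisymm
    · refine ContinuousLinearMap.opNorm_le_bound _ (norm_nonneg _) fun z => ?_
      rw [ContinuousLinearMap.comp_apply, hE, hsn]
      exact T₀.le_opNorm z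
    · refine ContinuousLinearMap.opNorm_le_bound _ (norm_nonneg _) fun z => ?_
      have := (E.comp T₀).le_opNorm z
      rwa [ContinuousLinearMap.comp_apply, hE, hsn] at this
  obtain ⟨S, x, hx1, hS, hSx, hxx, hST⟩ := h ε hε (E.comp T₀) x₀ hEn hx (by
    rw [ContinuousLinearMap.comp_apply, hE, hsn]; exact hη')
  have hne : ‖S x j‖ ≠ 0 := by
    intro h0
    have h1 : ‖(S - E.comp T₀) x‖ < 1 := by
      have := (S - E.comp T₀).le_opNorm x
      rw [hx1, mul_one] at this
      linarith [hε.2]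
    have h0' : S x j = 0 := norm_eq_zero.mp h0
    have h2 := hdec ((S - E.comp T₀) x)
    have h3 : (S - E.comp T₀) x - lp.single 1 j ((S - E.comp T₀) x j) = S x := by
      rw [← hE, ContinuousLinearMap.sub_apply, lp.coeFn_sub, Pi.sub_apply, h0',
        ContinuousLinearMap.comp_apply, hE, lp.single_apply_self, ← hE, zero_sub, map_neg]
      abel
    rw [h3, hSx] at h2
    linarith [norm_nonneg ((S - E.comp T₀) x j)]
  obtain ⟨φ, hφ, hφw⟩ := exists_dual_vector'' ℝ (S x - lp.single 1 j (S x j))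
  let u : Y j := ‖S x j‖⁻¹ • S x j
  have hu : ‖u‖ = 1 := by
    simp only [u, norm_smul, norm_inv, norm_norm]
    exact inv_mul_cancel₀ hne
  let ev : lp (fun j => Y j) 1 →L[ℝ] Y j := lp.evalCLM ℝ (fun j => Y j) 1 j
  have hev : ∀ v, ev v = v j := fun v => rfl
  let L : lp (fun j => Y j) 1 →L[ℝ] Y j :=
    ev + (φ.comp (ContinuousLinearMap.id ℝ _ - E.comp ev)).smulRight u
  have hL : ∀ v, L v = v j + φ (v - lp.single 1 j (v j)) • u := fun v => rfl
  have hLn : ∀ v, ‖L v‖ ≤ ‖v‖ := by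
    intro v
    rw [hL, hdec v]
    refine (norm_add_le _ _).trans ?_
    rw [norm_smul, hu, mul_one]
    gcongr
    exact (φ.le_opNorm _).trans (mul_le_of_le_one_left (norm_nonneg _) hφ)
  have hLE : ∀ y, L (E y) = y := by
    intro y
    rw [hL, hE, lp.single_apply_self, sub_self, map_zero, zero_smul, add_zero]
  have hLSx : ‖L (S x)‖ = 1 := by
    have h1 : L (S x) = (‖S x j‖ + ‖S x - lp.single 1 j (S x j)‖) • u := by
      rw [hL, hφw, add_smul]
      congr 1
      simp only [u]
      rw [smul_inv_smul₀ hne]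
    rw [h1, ← hdec, hSx, one_smul, hu]
  refine ⟨L.comp S, x, hx1, ?_, hLSx, hxx, ?_⟩
  · apply le_antisymm
    · refine ContinuousLinearMap.opNorm_le_bound _ zero_le_one fun z => ?_
      refine (hLn _).trans ?_
      simpa [hS] using S.le_opNorm z
    · have := (L.comp S).le_opNorm x
      rw [hx1, mul_one, ContinuousLinearMap.comp_apply, hLSx] at this
      exact this
  · refine lt_of_le_of_lt ?_ hST
    refine ContinuousLinearMap.opNorm_le_bound _ (norm_nonneg _) fun z => ?_
    have : (L.comp S - T₀) z = L ((S - E.comp T₀) z) := by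
      simp only [ContinuousLinearMap.sub_apply, ContinuousLinearMap.comp_apply, map_sub, hLE]
    rw [this]
    exact (hLn _).trans ((S - E.comp T₀).le_opNorm z)
end

section
/- Let Y₁ and Y₂ be Banach spaces over ℝ, let Y = Y₁ ⊕₁ Y₂ (the product Y₁ × Y₂ with the sum norm), and let X be a Banach space over ℝ. If the pair (X,Y) has the Bishop–Phelps–Bollobás property with a function η : (0,1) → (0,∞), then the pair (X, Y₁) also has the Bishop–Phelps–Bollobás property with the same function η. -/
open scoped ENNReal

/-- If the pair `(X, Y₁ ⊕₁ Y₂)` has the BPBp with a function `η`, then the pair `(X, Y₁)`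
has the BPBp with the same function `η`. -/
theorem bpbp_of_l1_prod_range
    (X Y₁ Y₂ : Type*)
    [NormedAddCommGroup X] [NormedSpace ℝ X] [CompleteSpace X]
    [NormedAddCommGroup Y₁] [NormedSpace ℝ Y₁] [CompleteSpace Y₁]
    [NormedAddCommGroup Y₂] [NormedSpace ℝ Y₂] [CompleteSpace Y₂]
    (η : ℝ → ℝ) (hη : ∀ ε ∈ Set.Ioo (0 : ℝ) 1, 0 < η ε)
    (h : BPBpWith X (WithLp 1 (Y₁ × Y₂)) η) :
    BPBpWith X Y₁ η := by
  intro ε hε T₀ x₀ hT hx₀ hTx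
  have hnorm : ∀ w : WithLp 1 (Y₁ × Y₂), ‖w‖ = ‖w.fst‖ + ‖w.snd‖ := by
    intro w
    simpa using WithLp.prod_norm_eq_add (p := 1) (by norm_num) w
  let e := WithLp.prodContinuousLinearEquiv 1 ℝ Y₁ Y₂
  let J : Y₁ →L[ℝ] WithLp 1 (Y₁ × Y₂) :=
    (e.symm : (Y₁ × Y₂) →L[ℝ] WithLp 1 (Y₁ × Y₂)).comp (ContinuousLinearMap.inl ℝ Y₁ Y₂)
  have hJ1 : ∀ y, (J y).fst = y := fun y => rfl
  have hJ2 : ∀ y, (J y).snd = 0 := fun y => rfl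
  have hJ : ∀ y, ‖J y‖ = ‖y‖ := by
    intro y
    rw [hnorm, hJ1, hJ2, norm_zero, add_zero]
  have hJT : ‖J.comp T₀‖ = 1 := by
    rw [← hT]
    apply le_antisymm
    · refine ContinuousLinearMap.opNorm_le_bound _ (norm_nonneg _) fun z => ?_
      rw [ContinuousLinearMap.comp_apply, hJ]
      exact T₀.le_opNorm z
    · refine ContinuousLinearMap.opNorm_le_bound _ (norm_nonneg _) fun z => ?_
      rw [← hJ, ← ContinuousLinearMap.comp_apply]
      exact (J.comp T₀).le_opNorm z
  obtain ⟨S, x, hx, hS, hSx, hxx, hST⟩ := h ε hε (J.comp T₀) x₀ hJT hx₀ (by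
    rw [ContinuousLinearMap.comp_apply, hJ]
    exact hTx)
  have hne : (S x).fst ≠ 0 := by
    intro h0
    have h1 := (S - J.comp T₀).le_opNorm x
    rw [hx, mul_one, hnorm] at h1
    have h2 : ((S - J.comp T₀) x).snd = (S x).snd := by
      change (S x).snd - (J (T₀ x)).snd = _
      rw [hJ2, sub_zero]
    rw [hnorm, h0, norm_zero, zero_add] at hSx
    rw [h2, hSx] at h1
    have := norm_nonneg ((S - J.comp T₀) x).fst
    linarith [hε.2]
  obtain ⟨g, hg, hgx⟩ := exists_dual_vector'' ℝ (S x).snd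
  have hgx' : g (S x).snd = ‖(S x).snd‖ := by simpa using hgx
  have hpos : 0 < ‖(S x).fst‖ := norm_pos_iff.2 hne
  obtain ⟨u, hu⟩ : ∃ u : Y₁, u = ‖(S x).fst‖⁻¹ • (S x).fst := ⟨_, rfl⟩
  have hu1 : ‖u‖ = 1 := by
    rw [hu, norm_smul, norm_inv, norm_norm, inv_mul_cancel₀ hpos.ne']
  have hu2 : (S x).fst = ‖(S x).fst‖ • u := by
    rw [hu, smul_smul, mul_inv_cancel₀ hpos.ne', one_smul]
  let P : WithLp 1 (Y₁ × Y₂) →L[ℝ] Y₁ :=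
    (ContinuousLinearMap.fst ℝ Y₁ Y₂ + (g.comp (ContinuousLinearMap.snd ℝ Y₁ Y₂)).smulRight u).comp
      (e : WithLp 1 (Y₁ × Y₂) →L[ℝ] (Y₁ × Y₂))
  have hP : ∀ w, P w = w.fst + g w.snd • u := fun w => rfl
  have hPn : ∀ w, ‖P w‖ ≤ ‖w‖ := by
    intro w
    rw [hP, hnorm]
    refine (norm_add_le _ _).trans ?_
    rw [norm_smul, hu1, mul_one]
    have := g.le_of_opNorm_le hg w.snd
    linarith
  have hPx : ‖P (S x)‖ = 1 := by
    rw [hP, hgx', hu2, ← add_smul, norm_smul, hu1, mul_one,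
      Real.norm_eq_abs, abs_of_nonneg (by positivity), ← hnorm, hSx]
  refine ⟨P.comp S, x, hx, ?_, hPx, hxx, ?_⟩
  · apply le_antisymm
    · refine ContinuousLinearMap.opNorm_le_bound _ zero_le_one fun z => ?_
      rw [← hS]
      exact (hPn _).trans (S.le_opNorm z)
    · have h1 := (P.comp S).le_opNorm x
      rw [hx, mul_one, ContinuousLinearMap.comp_apply, hPx] at h1
      exact h1
  · refine lt_of_le_of_lt ?_ hST
    refine ContinuousLinearMap.opNorm_le_bound _ (norm_nonneg _) fun z => ?_
    have h1 : (P.comp S - T₀) z = P ((S - J.comp T₀) z) := by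
      have h2 : P (J (T₀ z)) = T₀ z := by
        rw [hP, hJ1, hJ2, map_zero, zero_smul, add_zero]
      change P (S z) - T₀ z = P (S z - J (T₀ z))
      rw [map_sub, h2]
    rw [h1]
    exact (hPn _).trans ((S - J.comp T₀).le_opNorm z)
end

section
/- Let X and Y be Banach spaces over ℝ and let K be a compact Hausdorff topological space. If the pair (X, C(K,Y)) has the Bishop–Phelps–Bollobás property with a function η : (0,1) → (0,∞), where C(K,Y) denotes the Banach space of continuous functions from K to Y with the supremum norm, then the pair (X,Y) also has the Bishop–Phelps–Bollobás property with the same function η. -/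
open scoped ENNReal

/-- If `(X, C(K, Y))` has the BPBp with a function `η`, where `K` is a nonempty compact
Hausdorff space, then `(X, Y)` has the BPBp with the same function `η`. -/
theorem bpbp_of_continuousMap_range
    (X Y K : Type*)
    [NormedAddCommGroup X] [NormedSpace ℝ X] [CompleteSpace X]
    [NormedAddCommGroup Y] [NormedSpace ℝ Y] [CompleteSpace Y]
    [TopologicalSpace K] [CompactSpace K] [T2Space K] [Nonempty K]
    (η : ℝ → ℝ) (hη : ∀ ε ∈ Set.Ioo (0 : ℝ) 1, 0 < η ε)
    (h : BPBpWith X C(K, Y) η) :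
    BPBpWith X Y η := by
  intro ε hε T₀ x₀ hT hx hTx
  have hcn : ∀ y : Y, ‖(ContinuousMap.const K y : C(K, Y))‖ = ‖y‖ := by
    intro y
    apply le_antisymm
    · exact (ContinuousMap.norm_le _ (norm_nonneg y)).2 fun t => le_rfl
    · exact ContinuousMap.norm_coe_le_norm (ContinuousMap.const K y) (Classical.arbitrary K)
  let J : Y →ₗᵢ[ℝ] C(K, Y) :=
    { toFun := fun y => ContinuousMap.const K y
      map_add' := fun _ _ => rfl
      map_smul' := fun _ _ => rfl
      norm_map' := hcn }
  have hJT : ‖J.toContinuousLinearMap.comp T₀‖ = 1 := by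
    rw [← hT]
    exact J.norm_toContinuousLinearMap_comp
  obtain ⟨S, x, hx1, hS, hSx, hxx, hST⟩ :=
    h ε hε (J.toContinuousLinearMap.comp T₀) x₀ hJT hx (by
      have : ‖(J.toContinuousLinearMap.comp T₀) x₀‖ = ‖T₀ x₀‖ := hcn _
      rw [this]; exact hTx)
  -- the norm of `S x` is attained at some point `t`
  obtain ⟨t, -, ht⟩ := isCompact_univ.exists_isMaxOn (Set.univ_nonempty (α := K))
    ((S x).continuous.norm.continuousOn)
  have ht1 : ‖S x t‖ = 1 := by
    apply le_antisymm
    · rw [← hSx]; exact ContinuousMap.norm_coe_le_norm (S x) t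
    · rw [← hSx]
      exact (ContinuousMap.norm_le _ (norm_nonneg _)).2 fun s => ht (Set.mem_univ s)
  let R : X →L[ℝ] Y := (ContinuousMap.evalCLM ℝ t).comp S
  have hR : ∀ z, R z = S z t := fun z => rfl
  have hRle : ‖R‖ ≤ 1 := by
    refine R.opNorm_le_bound zero_le_one fun z => ?_
    rw [hR, ← hS]
    exact (ContinuousMap.norm_coe_le_norm (S z) t).trans (S.le_opNorm z)
  refine ⟨R, x, hx1, le_antisymm hRle ?_, ht1, hxx, lt_of_le_of_lt ?_ hST⟩
  · have := R.le_opNorm x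
    rw [hx1, mul_one, hR, ht1] at this
    exact this
  · refine ContinuousLinearMap.opNorm_le_bound _ (norm_nonneg _) fun z => ?_
    exact (ContinuousMap.norm_coe_le_norm ((S - J.toContinuousLinearMap.comp T₀) z) t).trans
      (ContinuousLinearMap.le_opNorm _ z)
end

section
/- Let {Y_j}_{j∈J} be a family of Banach spaces over ℝ, let Y = [⊕_{j∈J} Y_j]_{ℓ1} be their ℓ1-sum, and let X be a Banach space over ℝ. If the set NA(X,Y) of norm-attaining bounded linear operators from X to Y is dense in the space L(X,Y) of all bounded linear operators (with the operator norm), then for every j ∈ J the set NA(X,Y_j) is dense in L(X,Y_j). -/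
open scoped ENNReal

/-- A bounded linear operator `T : X → Y` attains its norm if `‖T x‖ = ‖T‖` for some `x` of
norm one. -/
def NormAttaining {X Y : Type*} [NormedAddCommGroup X] [NormedSpace ℝ X]
    [NormedAddCommGroup Y] [NormedSpace ℝ Y] (T : X →L[ℝ] Y) : Prop :=
  ∃ x : X, ‖x‖ = 1 ∧ ‖T x‖ = ‖T‖

open Classical in
theorem l1_norm_split {J : Type*} {Y : J → Type*}
    [∀ j, NormedAddCommGroup (Y j)] (j : J) (v : lp (fun j => Y j) 1) :
    ‖v‖ = ‖v j‖ + ‖v - lp.single 1 j (v j)‖ := by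
  have := lp.norm_sub_norm_compl_sub_single (p := 1) (by simp) v {j}
  simp only [ENNReal.toReal_one, Real.rpow_one, Finset.sum_singleton] at this
  linarith

open Classical in
theorem l1_exists_retraction {J : Type*} {Y : J → Type*}
    [∀ j, NormedAddCommGroup (Y j)] [∀ j, NormedSpace ℝ (Y j)] (j : J) [Nontrivial (Y j)]
    (w : lp (fun j => Y j) 1) :
    ∃ Q : lp (fun j => Y j) 1 →L[ℝ] Y j, (∀ v, ‖Q v‖ ≤ ‖v‖) ∧ ‖Q w‖ = ‖w‖ ∧
      ∀ y, Q (lp.single 1 j y) = y := by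
  obtain ⟨u, hu, hw⟩ : ∃ u : Y j, ‖u‖ = 1 ∧ w j = ‖w j‖ • u := by
    by_cases h0 : w j = 0
    · obtain ⟨u, hu⟩ := exists_norm_eq (Y j) (zero_le_one' ℝ)
      exact ⟨u, hu, by simp [h0]⟩
    · have h1 : ‖w j‖ ≠ 0 := norm_ne_zero_iff.2 h0
      refine ⟨‖w j‖⁻¹ • w j, ?_, ?_⟩
      · rw [norm_smul, norm_inv, norm_norm, inv_mul_cancel₀ h1]
      · rw [smul_smul, mul_inv_cancel₀ h1, one_smul]
  obtain ⟨φ, hφ, hφw⟩ := exists_dual_vector'' ℝ (w - lp.single 1 j (w j))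
  let ev := lp.evalCLM ℝ (fun j => Y j) 1 j
  let sg := lp.singleContinuousLinearMap ℝ (fun j => Y j) 1 j
  let Q : lp (fun j => Y j) 1 →L[ℝ] Y j :=
    ev + (φ.comp (ContinuousLinearMap.id ℝ _ - sg.comp ev)).smulRight u
  have hQ : ∀ v, Q v = v j + φ (v - lp.single 1 j (v j)) • u := fun v => rfl
  refine ⟨Q, fun v => ?_, ?_, fun y => ?_⟩
  · rw [hQ, l1_norm_split j v]
    refine (norm_add_le _ _).trans ?_
    rw [norm_smul, hu, mul_one]
    have := φ.le_of_opNorm_le hφ (v - lp.single 1 j (v j))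
    linarith
  · have : Q w = (‖w j‖ + ‖w - lp.single 1 j (w j)‖) • u := by
      rw [hQ, hφw, add_smul, ← hw]; rfl
    rw [this, ← l1_norm_split, norm_smul, hu, mul_one, norm_norm]
  · rw [hQ, lp.single_apply_self, sub_self, map_zero, zero_smul, add_zero]

/-- If the norm-attaining operators from `X` into the `ℓ₁`-sum `[⊕ⱼ Yⱼ]_{ℓ₁}` are dense in
the space of all bounded operators, then for every `j` the norm-attaining operators from `X`
into `Yⱼ` are dense. -/
theorem normAttaining_dense_of_l1_sum_range
    {J : Type*} (X : Type*) (Y : J → Type*)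
    [NormedAddCommGroup X] [NormedSpace ℝ X] [CompleteSpace X]
    [∀ j, NormedAddCommGroup (Y j)] [∀ j, NormedSpace ℝ (Y j)] [∀ j, CompleteSpace (Y j)]
    (h : Dense {T : X →L[ℝ] lp (fun j => Y j) 1 | NormAttaining T}) :
    ∀ j : J, Dense {T : X →L[ℝ] Y j | NormAttaining T} := by
  classical
  intro j
  rw [Metric.dense_iff]
  intro T ε hε
  let sg := lp.singleContinuousLinearMap ℝ (fun j => Y j) 1 j
  obtain ⟨S, hS, x, hx, hSx⟩ := Metric.dense_iff.1 h (sg.comp T) ε hε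
  rcases subsingleton_or_nontrivial (Y j) with hY | hY
  · refine ⟨T, Metric.mem_ball_self hε, x, hx, ?_⟩
    have : T = 0 := by ext z; exact Subsingleton.elim _ _
    simp [this]
  · obtain ⟨Q, hQ, hQw, hQs⟩ := l1_exists_retraction j (S x)
    refine ⟨Q.comp S, ?_, x, hx, ?_⟩
    · rw [Metric.mem_ball, dist_eq_norm] at hS ⊢
      refine lt_of_le_of_lt (ContinuousLinearMap.opNorm_le_bound _ (norm_nonneg _) fun z => ?_) hS
      have : (Q.comp S - T) z = Q ((S - sg.comp T) z) := by
        have h2 : Q (sg (T z)) = T z := hQs (T z)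
        simp [h2]
      rw [this]
      exact (hQ _).trans (ContinuousLinearMap.le_opNorm _ _)
    · refine le_antisymm ?_ (ContinuousLinearMap.opNorm_le_bound _ (norm_nonneg _) fun z => ?_)
      · simpa [hx] using (Q.comp S).le_opNorm x
      · have h3 : ‖(Q.comp S) x‖ = ‖S‖ := hQw.trans hSx
        rw [h3]
        exact (hQ _).trans (S.le_opNorm z)
end

section
/- Let X = C([0,1],ℝ) ⊕₁ L¹([0,1],ℝ), the ℓ1-sum of the Banach space of real-valued continuous functions on [0,1] with the supremum norm and the Lebesgue space L¹ of the unit interval, i.e. the product with norm ‖(f,g)‖ = ‖f‖_∞ + ‖g‖₁. Then the set NA(X,X) of norm-attaining bounded linear operators from X to X is not dense in L(X,X). -/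
open MeasureTheory

/-- The Banach space `X = C[0,1] ⊕₁ L₁[0,1]`. -/
noncomputable abbrev XCL : Type :=
  WithLp 1 (C(Set.Icc (0 : ℝ) 1, ℝ) ×
    Lp ℝ 1 ((volume : Measure ℝ).restrict (Set.Icc (0 : ℝ) 1)))

namespace NAaux

noncomputable section

/-- The measure on the unit interval. -/
abbrev mu : Measure ℝ := (volume : Measure ℝ).restrict (Set.Icc (0 : ℝ) 1)

/-- Oscillating switch. -/
def wave (k : ℕ) (t : ℝ) : ℝ := max 0 (-Real.cos (2 * Real.pi * (2 ^ k * t)))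

def pl (k : ℕ) : ℕ := (Nat.unpair (Nat.unpair k).1).1
def pi' (k : ℕ) : ℕ := (Nat.unpair (Nat.unpair (Nat.unpair k).1).2).1
def pq (k : ℕ) : ℕ := (Nat.unpair (Nat.unpair (Nat.unpair k).1).2).2

lemma pl_le (k : ℕ) : pl k ≤ k := (Nat.unpair_left_le _).trans (Nat.unpair_left_le _)
lemma pq_le (k : ℕ) : pq k ≤ k :=
  (Nat.unpair_right_le _).trans ((Nat.unpair_right_le _).trans (Nat.unpair_left_le _))

/-- Every parameter triple occurs infinitely often. -/
lemma exists_idx (l i q n : ℕ) : ∃ k, n ≤ k ∧ pl k = l ∧ pi' k = i ∧ pq k = q := by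
  refine ⟨Nat.pair (Nat.pair l (Nat.pair i q)) n, Nat.right_le_pair _ _, ?_, ?_, ?_⟩ <;>
  simp [pl, pi', pq]

/-- Remaining budget. -/
def RR : ℕ → ℝ → ℝ
  | 0, _ => 1
  | k + 1, t => RR k t - wave k t * min 1 (2 ^ pl k * RR k t / 2) / 2 ^ pl k

def vv (k : ℕ) (t : ℝ) : ℝ := wave k t * min 1 (2 ^ pl k * RR k t / 2)

def II (k : ℕ) (x : ℝ) : ℝ := if ⌊(2:ℝ) ^ pl k * x⌋₊ = pi' k then 1 else 0

def DD (m q : ℕ) (x : ℝ) : ℝ := if ⌊(2:ℝ) ^ (m + q) * x⌋₊ % 2 ^ q = 0 then 1 else 0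

def hh (q : ℕ) (g : ℝ) : ℝ := min (g / 2) ((1 - g) / 2 ^ q)

def GG : ℕ → ℝ → ℝ → ℝ
  | 0, _, _ => 1 / 4
  | k + 1, t, x => GG k t x +
      vv k t * II k x * (2 ^ pq k * DD (k ^ 2) (pq k) x - 1) * hh (pq k) (GG k t x)

lemma wave_cont (k : ℕ) : Continuous (wave k) := by unfold wave; fun_prop
lemma wave_nonneg (k : ℕ) (t : ℝ) : 0 ≤ wave k t := le_max_left _ _
lemma wave_le (k : ℕ) (t : ℝ) : wave k t ≤ 1 :=
  max_le (by norm_num) (by linarith [Real.neg_one_le_cos (2 * Real.pi * (2 ^ k * t))])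

lemma wave_zero {k k0 n : ℕ} (h : k0 ≤ k) : wave k (n / 2 ^ k0) = 0 := by
  obtain ⟨d, rfl⟩ := Nat.exists_eq_add_of_le h
  unfold wave
  have : 2 * Real.pi * (2 ^ (k0 + d) * (n / 2 ^ k0)) = ((2 ^ d * n : ℕ) : ℝ) * (2 * Real.pi) := by
    push_cast; rw [pow_add]; field_simp
  rw [this, Real.cos_nat_mul_two_pi]; norm_num

lemma wave_one {k k0 n : ℕ} (h : k0 ≤ k) : wave k (n / 2 ^ k0 + 1 / 2 ^ (k + 1)) = 1 := by
  obtain ⟨d, rfl⟩ := Nat.exists_eq_add_of_le h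
  unfold wave
  have : 2 * Real.pi * (2 ^ (k0 + d) * (n / 2 ^ k0 + 1 / 2 ^ (k0 + d + 1)))
      = Real.pi + ((2 ^ d * n : ℕ) : ℝ) * (2 * Real.pi) := by
    push_cast; rw [pow_add, pow_add, pow_add]; field_simp; ring
  rw [this, Real.cos_add_nat_mul_two_pi]; norm_num

lemma wave_gt {k k0 n j : ℕ} (h : k0 ≤ k) (hj : k < j) :
    wave j (n / 2 ^ k0 + 1 / 2 ^ (k + 1)) = 0 := by
  have : (n / 2 ^ k0 + 1 / 2 ^ (k + 1) : ℝ) = ((n * 2 ^ (k + 1 - k0) + 1 : ℕ) : ℝ) / 2 ^ (k + 1) := by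
    obtain ⟨d, rfl⟩ := Nat.exists_eq_add_of_le h
    have : k0 + d + 1 - k0 = d + 1 := by omega
    rw [this]; push_cast; rw [pow_add, pow_add, pow_add]; field_simp
  rw [this, wave_zero hj]

lemma wave_lt {k k0 n j : ℕ} (h : k0 ≤ j) (hj : j < k) :
    wave j (n / 2 ^ k0 + 1 / 2 ^ (k + 1)) = 0 := by
  obtain ⟨d, rfl⟩ := Nat.exists_eq_add_of_le h
  obtain ⟨e, rfl⟩ := Nat.exists_eq_add_of_le (Nat.succ_le_of_lt hj)
  unfold wave
  have : 2 * Real.pi * (2 ^ (k0 + d) * (n / 2 ^ k0 + 1 / 2 ^ ((k0 + d).succ + e + 1)))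
      = Real.pi / 2 * (1 / 2 ^ e) + ((2 ^ d * n : ℕ) : ℝ) * (2 * Real.pi) := by
    push_cast; simp only [Nat.succ_eq_add_one, pow_add]; field_simp; ring
  rw [this, Real.cos_add_nat_mul_two_pi]
  apply max_eq_left
  have h1 : (1:ℝ) / 2 ^ e ≤ 1 := by
    rw [div_le_one (by positivity)]; exact one_le_pow₀ (by norm_num)
  have h0 : (0:ℝ) ≤ 1 / 2 ^ e := by positivity
  have hp := Real.pi_pos
  have := Real.cos_nonneg_of_neg_pi_div_two_le_of_le (x := Real.pi / 2 * (1 / 2 ^ e))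
    (by nlinarith) (by nlinarith)
  linarith

lemma wave_at_zero (k : ℕ) : wave k 0 = 0 := by
  have := wave_zero (k := k) (k0 := 0) (n := 0) (Nat.zero_le _)
  simpa using this

lemma RR_pos (k : ℕ) (t : ℝ) : 0 < RR k t := by
  induction k with
  | zero => simp [RR]
  | succ k ih =>
    rw [RR]
    have h1 : min 1 (2 ^ pl k * RR k t / 2) / 2 ^ pl k ≤ RR k t / 2 := by
      rw [div_le_iff₀ (by positivity)]
      exact (min_le_right _ _).trans (by linarith)
    have h2 : 0 ≤ min 1 (2 ^ pl k * RR k t / 2) / 2 ^ pl k := by positivity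
    have := wave_le k t
    have h3 := wave_nonneg k t
    rw [mul_div_assoc]
    nlinarith

lemma RR_cont (k : ℕ) : Continuous (RR k) := by
  induction k with
  | zero => exact continuous_const
  | succ k ih =>
    have := wave_cont k
    show Continuous fun t => RR k t - wave k t * min 1 (2 ^ pl k * RR k t / 2) / 2 ^ pl k
    fun_prop

lemma vv_cont (k : ℕ) : Continuous (vv k) := by
  have := wave_cont k
  have := RR_cont k
  unfold vv; fun_prop

lemma vv_nonneg (k : ℕ) (t : ℝ) : 0 ≤ vv k t :=
  mul_nonneg (wave_nonneg _ _) (by have := RR_pos k t; positivity)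

lemma vv_le (k : ℕ) (t : ℝ) : vv k t ≤ 1 := by
  have h1 := wave_le k t
  have h2 := wave_nonneg k t
  have h3 : min 1 (2 ^ pl k * RR k t / 2) ≤ 1 := min_le_left _ _
  have := RR_pos k t
  have h4 : 0 ≤ min 1 (2 ^ pl k * RR k t / 2) := by positivity
  unfold vv; nlinarith

lemma RR_succ (k : ℕ) (t : ℝ) : RR (k + 1) t = RR k t - vv k t / 2 ^ pl k := rfl

lemma sum_vv (k : ℕ) (t : ℝ) : ∑ j ∈ Finset.range k, vv j t / 2 ^ pl j = 1 - RR k t := by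
  induction k with
  | zero => simp [RR]
  | succ k ih => rw [Finset.sum_range_succ, ih, RR_succ]; ring

lemma RR_const {k0 k : ℕ} {t : ℝ} (hk : k0 ≤ k) (h : ∀ j, k0 ≤ j → j < k → wave j t = 0) :
    RR k t = RR k0 t := by
  induction k, hk using Nat.le_induction with
  | base => rfl
  | succ k hk ih =>
    rw [RR_succ, vv, h k hk (Nat.lt_succ_self _), ih (fun j h1 h2 => h j h1 (by omega))]; simp

lemma GG_const {k0 k : ℕ} {t : ℝ} (hk : k0 ≤ k) (h : ∀ j, k0 ≤ j → j < k → wave j t = 0) :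
    GG k t = GG k0 t := by
  induction k, hk using Nat.le_induction with
  | base => rfl
  | succ k hk ih =>
    ext x
    rw [GG, vv, h k hk (Nat.lt_succ_self _), ih (fun j h1 h2 => h j h1 (by omega))]; simp

lemma II_cases (k : ℕ) (x : ℝ) : II k x = 0 ∨ II k x = 1 := by unfold II; split_ifs <;> simp
lemma DD_cases (m q : ℕ) (x : ℝ) : DD m q x = 0 ∨ DD m q x = 1 := by
  unfold DD; split_ifs <;> simp

lemma GG_step {q : ℕ} {g v I D : ℝ} (hg : 0 < g) (hg1 : g ≤ 1) (hv : 0 ≤ v) (hv1 : v ≤ 1)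
    (hI : I = 0 ∨ I = 1) (hD : D = 0 ∨ D = 1) :
    g * (1 - v * I / 2) ≤ g + v * I * (2 ^ q * D - 1) * hh q g ∧
    g + v * I * (2 ^ q * D - 1) * hh q g ≤ 1 := by
  have h1 : hh q g ≤ g / 2 := min_le_left _ _
  have h2 : hh q g ≤ (1 - g) / 2 ^ q := min_le_right _ _
  have h0 : 0 ≤ hh q g := le_min (by linarith) (div_nonneg (by linarith) (by positivity))
  have h3 : 2 ^ q * hh q g ≤ 1 - g := by
    rw [le_div_iff₀ (by positivity)] at h2; linarith
  have h4 : (1:ℝ) ≤ 2 ^ q := one_le_pow₀ (by norm_num)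
  rcases hI with rfl | rfl
  · simp [hg1]
  have h5 : 0 ≤ v * hh q g := mul_nonneg hv h0
  have h6 : 0 ≤ 2 ^ q * hh q g := by positivity
  rcases hD with rfl | rfl
  · constructor <;> nlinarith
  · constructor
    · nlinarith [mul_nonneg (sub_nonneg.2 h4) h5]
    · nlinarith

lemma GG_bd (k : ℕ) (t x : ℝ) : 0 < GG k t x ∧ GG k t x ≤ 1 := by
  induction k with
  | zero => simp only [GG]; norm_num
  | succ k ih =>
    have := GG_step (q := pq k) ih.1 ih.2 (vv_nonneg k t) (vv_le k t) (II_cases k x)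
      (DD_cases (k ^ 2) (pq k) x)
    rw [GG]
    refine ⟨lt_of_lt_of_le (mul_pos ih.1 ?_) this.1, this.2⟩
    have := vv_le k t
    rcases II_cases k x with h | h <;> rw [h] <;> linarith

lemma two_rpow_neg_le {v : ℝ} (h0 : 0 ≤ v) (h1 : v ≤ 1) : (2:ℝ) ^ (-v) ≤ 1 - v / 2 := by
  have := rpow_one_add_le_one_add_mul_self (s := -(1/2)) (by norm_num) h0 h1
  have h2 : (1 + -(1/2) : ℝ) ^ v = 2 ^ (-v) := by
    rw [Real.rpow_neg (by norm_num), ← Real.inv_rpow (by norm_num)]; norm_num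
  rw [h2] at this; linarith

lemma GG_lower (k : ℕ) (t x : ℝ) :
    (1 / 4) * (2:ℝ) ^ (-(∑ j ∈ Finset.range k, vv j t * II j x)) ≤ GG k t x := by
  induction k with
  | zero => simp [GG]
  | succ k ih =>
    have hb := GG_bd k t x
    have := GG_step (q := pq k) hb.1 hb.2 (vv_nonneg k t) (vv_le k t) (II_cases k x)
      (DD_cases (k ^ 2) (pq k) x)
    rw [GG]
    refine le_trans ?_ this.1
    rw [Finset.sum_range_succ, neg_add, Real.rpow_add (by norm_num), ← mul_assoc]
    have hv0 := vv_nonneg k t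
    have hv1 := vv_le k t
    apply mul_le_mul ih _ (by positivity) hb.1.le
    apply two_rpow_neg_le
    · rcases II_cases k x with h | h <;> rw [h] <;> linarith
    · rcases II_cases k x with h | h <;> rw [h] <;> linarith

lemma GG_cont (k : ℕ) (x : ℝ) : Continuous fun t => GG k t x := by
  induction k with
  | zero => exact continuous_const
  | succ k ih =>
    have := vv_cont k
    simp only [GG, hh]
    fun_prop

lemma II_meas (k : ℕ) : Measurable (II k) := by
  unfold II
  refine Measurable.ite (measurableSet_eq_fun (by fun_prop) measurable_const) ?_ ?_ <;> fun_prop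

lemma DD_meas (m q : ℕ) : Measurable (DD m q) := by
  have h : Measurable fun x : ℝ => ⌊(2:ℝ) ^ (m + q) * x⌋₊ := by fun_prop
  exact (measurable_from_nat (f := fun n : ℕ => if n % 2 ^ q = 0 then (1:ℝ) else 0)).comp h

lemma GG_meas (k : ℕ) (t : ℝ) : Measurable (GG k t) := by
  induction k with
  | zero => exact measurable_const
  | succ k ih =>
    have := II_meas k
    have := DD_meas (k ^ 2) (pq k)
    show Measurable fun x => GG k t x +
      vv k t * II k x * (2 ^ pq k * DD (k ^ 2) (pq k) x - 1) * min (GG k t x / 2) ((1 - GG k t x) / 2 ^ pq k)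
    fun_prop

/-- The value after a full drop. -/
lemma drop_val {q : ℕ} {g : ℝ} (hq : 1 ≤ q) (hg : 1 / 2 ^ q ≤ g) (hg1 : g ≤ 1) :
    1 / 2 ≤ g + 1 * 1 * (2 ^ q * 1 - 1) * hh q g := by
  have h4 : (2:ℝ) ≤ 2 ^ q := by
    calc (2:ℝ) = 2 ^ 1 := by norm_num
      _ ≤ _ := pow_le_pow_right₀ (by norm_num) hq
  rw [div_le_iff₀ (by positivity)] at hg
  unfold hh
  rcases min_cases (g / 2) ((1 - g) / 2 ^ q) with h | h
  · rw [h.1]; nlinarith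
  · rw [h.1]
    have : g + 1 * 1 * (2 ^ q * 1 - 1) * ((1 - g) / 2 ^ q) = 1 - (1 - g) / 2 ^ q := by
      field_simp; ring
    rw [this]
    have : (1 - g) / 2 ^ q ≤ 1 / 2 := by
      rw [div_le_iff₀ (by positivity)]
      have : 0 ≤ g := by
        by_contra hc
        nlinarith
      nlinarith
    linarith

/-- Functions constant on dyadic intervals. -/
def Lev (m : ℕ) (G : ℝ → ℝ) : Prop := ∃ F : ℕ → ℝ, ∀ x, G x = F ⌊(2:ℝ) ^ m * x⌋₊

lemma floor_div (m d : ℕ) (x : ℝ) : ⌊(2:ℝ) ^ m * x⌋₊ = ⌊(2:ℝ) ^ (m + d) * x⌋₊ / 2 ^ d := by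
  rw [← Nat.floor_div_natCast]; congr 1; push_cast; rw [pow_add]; field_simp

lemma Lev.mono {m m' : ℕ} {G : ℝ → ℝ} (h : Lev m G) (hm : m ≤ m') : Lev m' G := by
  obtain ⟨F, hF⟩ := h
  obtain ⟨d, rfl⟩ := Nat.exists_eq_add_of_le hm
  exact ⟨fun n => F (n / 2 ^ d), fun x => by rw [hF, floor_div m d]⟩

lemma Lev.comp2 {m : ℕ} {G H : ℝ → ℝ} (f : ℝ → ℝ → ℝ) (h : Lev m G) (h' : Lev m H) :
    Lev m (fun x => f (G x) (H x)) := by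
  obtain ⟨F, hF⟩ := h
  obtain ⟨F', hF'⟩ := h'
  exact ⟨fun n => f (F n) (F' n), fun x => by simp only [hF, hF']⟩

lemma II_lev (k : ℕ) : Lev (pl k) (II k) := ⟨fun n => if n = pi' k then 1 else 0, fun _ => rfl⟩
lemma DD_lev (m q : ℕ) : Lev (m + q) (DD m q) :=
  ⟨fun n => if n % 2 ^ q = 0 then 1 else 0, fun _ => rfl⟩

lemma GG_lev (k : ℕ) (t : ℝ) : Lev (k ^ 2) (GG k t) := by
  induction k with
  | zero => exact ⟨fun _ => 1 / 4, fun _ => rfl⟩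
  | succ k ih =>
    have hq := pq_le k
    have hl := pl_le k
    have h1 : Lev ((k + 1) ^ 2) (GG k t) := ih.mono (by nlinarith)
    have h2 : Lev ((k + 1) ^ 2) (II k) := (II_lev k).mono (by nlinarith)
    have h3 : Lev ((k + 1) ^ 2) (DD (k ^ 2) (pq k)) := (DD_lev _ _).mono (by nlinarith)
    exact (h1.comp2 (fun a b => a + b) ((h2.comp2 (fun a b => vv k t * a * (2 ^ pq k * b - 1)) h3).comp2
      (fun a b => a * hh (pq k) b) h1))

end

end NAaux

namespace NAaux
noncomputable section

lemma ae_floor (n k : ℕ) {x : ℝ} (h1 : (k:ℝ) / 2 ^ n < x) (h2 : x < ((k + 1 : ℕ):ℝ) / 2 ^ n) :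
    ⌊(2:ℝ) ^ n * x⌋₊ = k := by
  rw [div_lt_iff₀ (by positivity)] at h1
  rw [lt_div_iff₀ (by positivity)] at h2
  push_cast at h2
  rw [Nat.floor_eq_iff (by nlinarith [Nat.cast_nonneg (α := ℝ) k])]
  constructor <;> linarith

lemma int_floor (n : ℕ) (H : ℕ → ℝ) :
    ∫ x, H ⌊(2:ℝ) ^ n * x⌋₊ ∂mu = (∑ i ∈ Finset.range (2 ^ n), H i) / 2 ^ n := by
  have hle : ∀ k : ℕ, (k:ℝ) / 2 ^ n ≤ ((k + 1 : ℕ):ℝ) / 2 ^ n := fun k => by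
    gcongr; simp
  have key : ∀ k : ℕ, ∀ x ∈ Set.Ioo ((k:ℝ) / 2 ^ n) (((k + 1 : ℕ):ℝ) / 2 ^ n),
      H ⌊(2:ℝ) ^ n * x⌋₊ = H k := fun k x hx => by rw [ae_floor n k hx.1 hx.2]
  have h1 := intervalIntegral.sum_integral_adjacent_intervals
    (f := fun x : ℝ => H ⌊(2:ℝ) ^ n * x⌋₊) (μ := volume) (a := fun k : ℕ => (k:ℝ) / 2 ^ n)
    (n := 2 ^ n) (fun k _ => by
      rw [intervalIntegrable_iff_integrableOn_Ioo_of_le (hle k)]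
      refine (integrableOn_congr_fun (key k) measurableSet_Ioo).2 ?_
      exact integrableOn_const (by simp))
  have h2 : ∀ k : ℕ, ∫ x in ((k:ℝ) / 2 ^ n)..(((k + 1 : ℕ):ℝ) / 2 ^ n), H ⌊(2:ℝ) ^ n * x⌋₊
      = H k / 2 ^ n := by
    intro k
    rw [intervalIntegral.integral_of_le (hle k), integral_Ioc_eq_integral_Ioo,
      setIntegral_congr_fun measurableSet_Ioo (key k)]
    simp only [integral_const, MeasurableSet.univ, measureReal_restrict_apply, Set.univ_inter,
      Real.volume_real_Ioo_of_le (hle k), smul_eq_mul]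
    push_cast; ring
  simp only [h2] at h1
  rw [← Finset.sum_div] at h1
  rw [h1, integral_Icc_eq_integral_Ioc, ← intervalIntegral.integral_of_le zero_le_one]
  simp

lemma sum_range_mul' (f : ℕ → ℝ) (a b : ℕ) :
    ∑ i ∈ Finset.range (a * b), f i
      = ∑ i ∈ Finset.range a, ∑ j ∈ Finset.range b, f (i * b + j) := by
  induction a with
  | zero => simp
  | succ a ih => rw [Nat.succ_mul, Finset.sum_range_add, ih, Finset.sum_range_succ]

lemma orth_step {m : ℕ} (q : ℕ) {s : ℝ → ℝ} (hs : Lev m s) :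
    ∫ x, s x * (2 ^ q * DD m q x - 1) ∂mu = 0 := by
  obtain ⟨F, hF⟩ := hs
  have : ∀ x, s x * (2 ^ q * DD m q x - 1) = (fun n : ℕ => F (n / 2 ^ q) *
      (2 ^ q * (if n % 2 ^ q = 0 then 1 else 0) - 1)) ⌊(2:ℝ) ^ (m + q) * x⌋₊ := by
    intro x
    simp only
    rw [hF, floor_div m q, DD]
  refine (integral_congr_ae (Filter.Eventually.of_forall this)).trans ?_
  refine (int_floor (m + q) (fun n : ℕ => F (n / 2 ^ q) *
      (2 ^ q * (if n % 2 ^ q = 0 then 1 else 0) - 1))).trans ?_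
  rw [pow_add, sum_range_mul', div_eq_zero_iff]
  left
  apply Finset.sum_eq_zero
  intro i _
  have h2 : ∀ j ∈ Finset.range (2 ^ q), F ((i * 2 ^ q + j) / 2 ^ q) *
      (2 ^ q * (if (i * 2 ^ q + j) % 2 ^ q = 0 then 1 else 0) - 1) =
      F i * (2 ^ q * (if j = 0 then 1 else 0) - 1) := by
    intro j hj
    have hj := Finset.mem_range.1 hj
    have e1 : (i * 2 ^ q + j) / 2 ^ q = i := by
      rw [Nat.add_comm, Nat.add_mul_div_right _ _ (by positivity), Nat.div_eq_of_lt hj, zero_add]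
    have e2 : (i * 2 ^ q + j) % 2 ^ q = j := by
      rw [Nat.add_comm, Nat.add_mul_mod_self_right, Nat.mod_eq_of_lt hj]
    rw [e1, e2]
  rw [Finset.sum_congr rfl h2, ← Finset.mul_sum, Finset.sum_sub_distrib, ← Finset.mul_sum]
  simp

lemma int_II (k : ℕ) : ∫ x, II k x ∂mu ≤ 1 / 2 ^ pl k := by
  unfold II
  rw [int_floor (pl k) (fun n => if n = pi' k then 1 else 0)]
  gcongr
  rw [Finset.sum_ite_eq']
  split_ifs <;> norm_num

lemma Lev.meas {m : ℕ} {s : ℝ → ℝ} (hs : Lev m s) : Measurable s := by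
  obtain ⟨F, hF⟩ := hs
  have : s = F ∘ fun x => ⌊(2:ℝ) ^ m * x⌋₊ := funext hF
  rw [this]
  exact (measurable_from_nat (f := F)).comp (by fun_prop)

lemma integrable_bdd {s : ℝ → ℝ} (hs : Measurable s) {C : ℝ} (h : ∀ x, |s x| ≤ C) :
    Integrable s mu :=
  Integrable.of_bound hs.aestronglyMeasurable C (Filter.Eventually.of_forall h)

lemma integrable_mul_bdd {γ s : ℝ → ℝ} (hγ : Integrable γ mu) (hs : Measurable s) {C : ℝ}
    (h : ∀ x, |s x| ≤ C) : Integrable (fun x => γ x * s x) mu :=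
  hγ.mul_bdd (c := C) hs.aestronglyMeasurable (Filter.Eventually.of_forall h)

/-- Uniform weak-star smallness of functions orthogonal to dyadic steps. -/
lemma weak_small {γ : ℝ → ℝ} (hγ : Integrable γ mu) (C : ℝ) {δ : ℝ} (hδ : 0 < δ) :
    ∃ m0 : ℕ, ∀ m ≥ m0, ∀ G : ℝ → ℝ, Measurable G → (∀ x, |G x| ≤ C) →
      (∀ s, Lev m s → ∫ x, s x * G x ∂mu = 0) → |∫ x, γ x * G x ∂mu| ≤ δ := by
  set C' := |C| + 1 with hC'
  have hC'0 : 0 < C' := by positivity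
  obtain ⟨g, hgc, hgi, hgcont, hgint⟩ := hγ.exists_hasCompactSupport_integral_sub_le
    (ε := δ / (2 * C')) (by positivity)
  have huc : UniformContinuous g := hgcont.uniformContinuous_of_tendsto_cocompact
    (hgc.is_zero_at_infty)
  obtain ⟨η, hη, hgη⟩ := Metric.uniformContinuous_iff.1 huc (δ / (2 * C')) (by positivity)
  obtain ⟨m0, hm0⟩ := exists_pow_lt_of_lt_one hη (y := (1/2 : ℝ)) (by norm_num)
  refine ⟨m0, fun m hm G hG hGC horth => ?_⟩
  have hGC' : ∀ x, |G x| ≤ C' := fun x => (hGC x).trans (by rw [hC']; linarith [le_abs_self C])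
  set s : ℝ → ℝ := fun x => g (⌊(2:ℝ) ^ m * x⌋₊ / 2 ^ m) with hs
  have hsL : Lev m s := ⟨fun n => g (n / 2 ^ m), fun _ => rfl⟩
  have hclose : ∀ x, 0 ≤ x → |g x - s x| ≤ δ / (2 * C') := by
    intro x hx
    rw [← Real.dist_eq]
    apply le_of_lt
    apply hgη
    rw [Real.dist_eq]
    have hp : (0:ℝ) < 2 ^ m := by positivity
    have h1 := Nat.floor_le (a := (2:ℝ) ^ m * x) (by positivity)
    have h2 := Nat.lt_floor_add_one ((2:ℝ) ^ m * x)
    have e : x - (⌊(2:ℝ) ^ m * x⌋₊ : ℝ) / 2 ^ m = (2 ^ m * x - ⌊(2:ℝ) ^ m * x⌋₊) / 2 ^ m := by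
      field_simp
    rw [e, abs_of_nonneg (div_nonneg (by linarith) hp.le), div_lt_iff₀ hp]
    have h3 : 1 ≤ η * 2 ^ m := by
      have : (1/2:ℝ) ^ m ≤ (1/2) ^ m0 := pow_le_pow_of_le_one (by norm_num) (by norm_num) hm
      have h4 : (1/2:ℝ) ^ m * 2 ^ m = 1 := by rw [← mul_pow]; norm_num
      nlinarith
    linarith
  obtain ⟨Cg, hCg⟩ := hgc.exists_bound_of_continuous hgcont
  have hsi : Integrable s mu := integrable_bdd hsL.meas (C := Cg) (fun x => hCg _)
  have i1 := integrable_mul_bdd (hγ.sub hgint) hG hGC'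
  have i2 := integrable_mul_bdd (hgint.sub hsi) hG hGC'
  have i3 := integrable_mul_bdd hsi hG hGC'
  have split : ∫ x, γ x * G x ∂mu = ∫ x, (γ - g) x * G x ∂mu + ∫ x, (g - s) x * G x ∂mu := by
    have : ∀ x, γ x * G x = ((γ - g) x * G x + (g - s) x * G x) + s x * G x := by
      intro x; simp only [Pi.sub_apply]; ring
    simp_rw [this]
    have i12 : Integrable (fun x => (γ - g) x * G x + (g - s) x * G x) mu := i1.add i2
    rw [integral_add i12 i3, horth s hsL, add_zero, integral_add i1 i2]
  rw [split]
  have b1 : |∫ x, (γ - g) x * G x ∂mu| ≤ δ / 2 := by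
    calc _ ≤ ∫ x, |(γ - g) x * G x| ∂mu := abs_integral_le_integral_abs
      _ ≤ ∫ x, ‖γ x - g x‖ * C' ∂mu := by
        apply integral_mono i1.abs ((hγ.sub hgint).norm.mul_const C')
        intro x
        simp only [abs_mul, Pi.sub_apply, Real.norm_eq_abs]
        exact mul_le_mul_of_nonneg_left (hGC' x) (abs_nonneg _)
      _ ≤ δ / (2 * C') * C' := by
        rw [integral_mul_const]; gcongr
      _ = δ / 2 := by field_simp
  have b2 : |∫ x, (g - s) x * G x ∂mu| ≤ δ / 2 := by
    have : ∀ᵐ x ∂mu, ‖(g - s) x * G x‖ ≤ δ / (2 * C') * C' := by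
      filter_upwards [ae_restrict_mem measurableSet_Icc] with x hx
      rw [norm_mul]
      exact mul_le_mul (hclose x hx.1) (hGC' x) (abs_nonneg _) (by positivity)
    have h := norm_integral_le_of_norm_le_const this
    rw [Real.norm_eq_abs] at h
    refine h.trans (le_of_eq ?_)
    simp
    field_simp
  calc _ ≤ _ := abs_add_le _ _
    _ ≤ δ := by linarith

end
end NAaux

namespace NAaux
noncomputable section
open Filter Topology

lemma Lev.integrable {m : ℕ} {s : ℝ → ℝ} (hs : Lev m s) : Integrable s mu := by
  have hm := hs.meas
  obtain ⟨F, hF⟩ := hs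
  refine Integrable.of_bound hm.aestronglyMeasurable
    (∑ i ∈ Finset.range (2 ^ m + 1), |F i|) ?_
  filter_upwards [ae_restrict_mem measurableSet_Icc] with x hx
  rw [hF, Real.norm_eq_abs]
  apply Finset.single_le_sum (f := fun i => |F i|) (fun i _ => abs_nonneg _)
  rw [Finset.mem_range, Nat.lt_succ_iff]
  apply Nat.floor_le_of_le
  push_cast
  have : (0:ℝ) < 2 ^ m := by positivity
  nlinarith [hx.2]

lemma GG_abs (k : ℕ) (t x : ℝ) : |GG k t x| ≤ 1 := by
  have := GG_bd k t x
  rw [abs_of_pos this.1]; exact this.2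

lemma orth_GG {k j : ℕ} (hkj : k ≤ j) (t : ℝ) {s : ℝ → ℝ} (hs : Lev (k ^ 2) s) :
    ∫ x, s x * GG j t x ∂mu = ∫ x, s x * GG k t x ∂mu := by
  induction j, hkj using Nat.le_induction with
  | base => rfl
  | succ j hj ih =>
    rw [← ih]
    have hsj : Lev (j ^ 2) s := hs.mono (Nat.pow_le_pow_left hj 2)
    have hl : Lev (j ^ 2) (II j) := (II_lev j).mono (by have := pl_le j; nlinarith)
    have hs' : Lev (j ^ 2) (fun x => s x * (vv j t * II j x * hh (pq j) (GG j t x))) :=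
      hsj.comp2 (fun a b => a * b) (hl.comp2 (fun a b => vv j t * a * hh (pq j) b) (GG_lev j t))
    have i1 : Integrable (fun x => s x * GG j t x) mu :=
      integrable_mul_bdd hs.integrable (GG_meas j t) (GG_abs j t)
    have i0 : Integrable (fun x => s x * GG (j + 1) t x) mu :=
      integrable_mul_bdd hs.integrable (GG_meas _ t) (GG_abs _ t)
    have e : ∀ x, s x * GG (j + 1) t x - s x * GG j t x = (fun x => s x * (vv j t * II j x *
        hh (pq j) (GG j t x))) x * (2 ^ pq j * DD (j ^ 2) (pq j) x - 1) := by
      intro x; rw [GG]; ring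
    have h := orth_step (pq j) hs'
    rw [← integral_congr_ae (Filter.Eventually.of_forall e), integral_sub i0 i1] at h
    linarith

/-- The finite stage operators. -/
def Tk (k : ℕ) : Lp ℝ 1 mu →L[ℝ] C(Set.Icc (0:ℝ) 1, ℝ) :=
  LinearMap.mkContinuous
    { toFun := fun g =>
        { toFun := fun t => ∫ x, g x * (1 - GG k t x) ∂mu
          continuous_toFun := by
            refine continuous_of_dominated (bound := fun x => |g x|) ?_ ?_ ?_ ?_
            · intro t
              exact (Lp.aestronglyMeasurable g).mul
                ((measurable_const.sub (GG_meas k t)).aestronglyMeasurable)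
            · intro t
              refine Eventually.of_forall fun x => ?_
              have := GG_bd k t x
              rw [norm_mul, Real.norm_eq_abs, Real.norm_eq_abs]
              exact mul_le_of_le_one_right (abs_nonneg _) (by rw [abs_le]; constructor <;> linarith)
            · exact (L1.integrable_coeFn g).abs
            · refine Eventually.of_forall fun x => ?_
              exact continuous_const.mul (continuous_const.sub
                ((GG_cont k x).comp continuous_subtype_val)) }
      map_add' := by
        intro f g
        ext t
        simp only [ContinuousMap.coe_mk, ContinuousMap.add_apply]
        have hb : ∀ x, |1 - GG k t x| ≤ 1 := fun x => by
          have := GG_bd k t x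
          rw [abs_le]; constructor <;> linarith
        have hm : Measurable fun x => 1 - GG k t x := measurable_const.sub (GG_meas k t)
        rw [← integral_add (integrable_mul_bdd (L1.integrable_coeFn f) hm hb)
          (integrable_mul_bdd (L1.integrable_coeFn g) hm hb)]
        apply integral_congr_ae
        filter_upwards [Lp.coeFn_add f g] with x hx
        rw [hx, Pi.add_apply]; ring
      map_smul' := by
        intro c f
        ext t
        simp only [ContinuousMap.coe_mk, ContinuousMap.smul_apply, RingHom.id_apply, smul_eq_mul]
        rw [← integral_const_mul]
        apply integral_congr_ae
        filter_upwards [Lp.coeFn_smul c f] with x hx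
        rw [hx, Pi.smul_apply, smul_eq_mul]; ring } 1 (by
    intro g
    rw [one_mul]
    refine (ContinuousMap.norm_le _ (norm_nonneg _)).2 fun t => ?_
    simp only [LinearMap.coe_mk, AddHom.coe_mk, ContinuousMap.coe_mk]
    rw [L1.norm_eq_integral_norm]
    refine norm_integral_le_of_norm_le (L1.integrable_coeFn g).norm (Eventually.of_forall fun x => ?_)
    have := GG_bd k t x
    rw [norm_mul]
    exact mul_le_of_le_one_right (norm_nonneg _)
      (by rw [Real.norm_eq_abs, abs_le]; constructor <;> linarith))

lemma Tk_apply (k : ℕ) (g : Lp ℝ 1 mu) (t : Set.Icc (0:ℝ) 1) :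
    Tk k g t = ∫ x, g x * (1 - GG k t x) ∂mu := rfl

lemma Tk_cauchy (g : Lp ℝ 1 mu) : CauchySeq fun k => Tk k g := by
  rw [Metric.cauchySeq_iff']
  intro ε hε
  have hg := L1.integrable_coeFn g
  obtain ⟨m0, hm0⟩ := weak_small hg 2 (half_pos hε)
  refine ⟨m0, fun n hn => ?_⟩
  refine lt_of_le_of_lt ((ContinuousMap.dist_le (half_pos hε).le).2 fun t => ?_) (half_lt_self hε)
  have h := hm0 (m0 ^ 2) (by nlinarith) (fun x => GG m0 t x - GG n t x)
    ((GG_meas _ _).sub (GG_meas _ _)) (fun x => by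
      have h1 := GG_bd m0 t x
      have h2 := GG_bd n t x
      rw [abs_le]; constructor <;> linarith) (fun s hs => by
      have i1 := integrable_mul_bdd hs.integrable (GG_meas m0 t) (GG_abs m0 t)
      have i2 := integrable_mul_bdd hs.integrable (GG_meas n t) (GG_abs n t)
      simp only [mul_sub]
      rw [integral_sub i1 i2, orth_GG hn t hs, sub_self])
  rw [Real.dist_eq, Tk_apply, Tk_apply]
  have hb : ∀ k x, |1 - GG k t x| ≤ 1 := fun k x => by
    have := GG_bd k t x
    rw [abs_le]; constructor <;> linarith
  have hm : ∀ k, Measurable fun x => 1 - GG k t x := fun k => measurable_const.sub (GG_meas k t)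
  rw [← integral_sub (integrable_mul_bdd hg (hm n) (hb n)) (integrable_mul_bdd hg (hm m0) (hb m0))]
  refine le_trans (le_of_eq ?_) h
  congr 1
  apply integral_congr_ae
  refine Eventually.of_forall fun x => ?_
  simp only
  ring

lemma exists_T : ∃ T : Lp ℝ 1 mu →L[ℝ] C(Set.Icc (0:ℝ) 1, ℝ),
    ∀ g (t : Set.Icc (0:ℝ) 1),
      Tendsto (fun k => ∫ x, g x * (1 - GG k t x) ∂mu) atTop (𝓝 (T g t)) := by
  have h := fun g => cauchySeq_tendsto_of_complete (Tk_cauchy g)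
  choose f hf using h
  have h' : Tendsto (fun n x => Tk n x) atTop (𝓝 f) := tendsto_pi_nhds.2 hf
  refine ⟨continuousLinearMapOfTendsto Tk h', fun g t => ?_⟩
  exact ((continuous_eval_const t).tendsto _).comp (hf g)

end
end NAaux

namespace NAaux
noncomputable section
open Filter Topology

abbrev L1s := Lp ℝ 1 mu
abbrev C01 := C(Set.Icc (0:ℝ) 1, ℝ)

def IsT (T : L1s →L[ℝ] C01) : Prop := ∀ g (t : Set.Icc (0:ℝ) 1),
      Tendsto (fun k => ∫ x, g x * (1 - GG k t x) ∂mu) atTop (𝓝 (T g t))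

lemma one_sub_GG_abs (k : ℕ) (t x : ℝ) : |1 - GG k t x| ≤ 1 := by
  have := GG_bd k t x
  rw [abs_le]; constructor <;> linarith

lemma one_sub_GG_meas (k : ℕ) (t : ℝ) : Measurable fun x => 1 - GG k t x :=
  measurable_const.sub (GG_meas k t)

lemma IsT.eq {T : L1s →L[ℝ] C01} (hT : IsT T) (k0 : ℕ) (t : Set.Icc (0:ℝ) 1)
    (h : ∀ j, k0 ≤ j → wave j t = 0) (g : L1s) : T g t = ∫ x, g x * (1 - GG k0 t x) ∂mu := by
  refine tendsto_nhds_unique (hT g t) (tendsto_const_nhds.congr' ?_)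
  filter_upwards [eventually_ge_atTop k0] with k hk
  rw [GG_const hk (fun j hj _ => h j hj)]

lemma IsT.nonneg {T : L1s →L[ℝ] C01} (hT : IsT T) (t : Set.Icc (0:ℝ) 1) (g : L1s)
    (hg : 0 ≤ᵐ[mu] g) : 0 ≤ T g t := by
  refine ge_of_tendsto' (hT g t) fun k => integral_nonneg_of_ae ?_
  filter_upwards [hg] with x hx
  exact mul_nonneg hx (by linarith [(GG_bd k t x).2])

/-- Evaluation of the operator on an integrable function. -/
def ev (S : L1s →L[ℝ] C01) (t : Set.Icc (0:ℝ) 1) (γ : ℝ → ℝ) : ℝ :=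
  open Classical in if h : Integrable γ mu then S (h.toL1 γ) t else 0

lemma ev_eq {S : L1s →L[ℝ] C01} {t : Set.Icc (0:ℝ) 1} {γ : ℝ → ℝ} (h : Integrable γ mu) :
    ev S t γ = S (h.toL1 γ) t := dif_pos h

lemma ev_coe (S : L1s →L[ℝ] C01) (t : Set.Icc (0:ℝ) 1) (g : L1s) : ev S t g = S g t := by
  rw [ev_eq (L1.integrable_coeFn g), Integrable.toL1_coeFn]

lemma ev_congr {S : L1s →L[ℝ] C01} {t : Set.Icc (0:ℝ) 1} {f g : ℝ → ℝ} (hf : Integrable f mu)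
    (h : f =ᵐ[mu] g) : ev S t f = ev S t g := by
  rw [ev_eq hf, ev_eq (hf.congr h), (Integrable.toL1_eq_toL1_iff _ _ _ _).2 h]

lemma ev_add {S : L1s →L[ℝ] C01} {t : Set.Icc (0:ℝ) 1} {f g : ℝ → ℝ} (hf : Integrable f mu)
    (hg : Integrable g mu) : ev S t (f + g) = ev S t f + ev S t g := by
  rw [ev_eq hf, ev_eq hg, ev_eq (hf.add hg), Integrable.toL1_add, map_add]; rfl

lemma ev_zero {S : L1s →L[ℝ] C01} {t : Set.Icc (0:ℝ) 1} : ev S t 0 = 0 := by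
  rw [ev_eq (integrable_zero _ _ _), Integrable.toL1_zero, map_zero]; rfl

lemma ev_sum {ι : Type*} {S : L1s →L[ℝ] C01} {t : Set.Icc (0:ℝ) 1} (s : Finset ι)
    (f : ι → ℝ → ℝ) (hf : ∀ i, Integrable (f i) mu) :
    ev S t (∑ i ∈ s, f i) = ∑ i ∈ s, ev S t (f i) := by
  classical
  induction s using Finset.induction_on with
  | empty => simp [ev_zero]
  | insert a s ha ih =>
    rw [Finset.sum_insert ha, Finset.sum_insert ha, ev_add (hf a) (integrable_finsetSum' s fun i _ => hf i), ih]

lemma norm_toL1_int {γ : ℝ → ℝ} (h : Integrable γ mu) : ‖h.toL1 γ‖ = ∫ x, |γ x| ∂mu := by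
  rw [L1.norm_eq_integral_norm]
  apply integral_congr_ae
  filter_upwards [h.coeFn_toL1] with x hx
  rw [hx, Real.norm_eq_abs]

lemma ev_abs_le {S : L1s →L[ℝ] C01} {M : ℝ} (hM : ∀ h, ‖S h‖ ≤ M * ‖h‖) (t : Set.Icc (0:ℝ) 1)
    {γ : ℝ → ℝ} (hγ : Integrable γ mu) : |ev S t γ| ≤ M * ∫ x, |γ x| ∂mu := by
  rw [ev_eq hγ, ← norm_toL1_int hγ]
  exact ((S (hγ.toL1 γ)).norm_coe_le_norm t).trans (hM _)

lemma ev_cont (S : L1s →L[ℝ] C01) (γ : ℝ → ℝ) : Continuous fun t => ev S t γ := by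
  by_cases h : Integrable γ mu
  · simp only [ev_eq h]; exact (S (h.toL1 γ)).continuous
  · simp only [ev, dif_neg h]; exact continuous_const

lemma ev_near {S T : L1s →L[ℝ] C01} {e : ℝ} (hST : ∀ h, ‖S h - T h‖ ≤ e * ‖h‖)
    (t : Set.Icc (0:ℝ) 1) {γ : ℝ → ℝ} (hγ : Integrable γ mu) :
    |ev S t γ - ev T t γ| ≤ e * ∫ x, |γ x| ∂mu := by
  rw [ev_eq hγ, ev_eq hγ, ← norm_toL1_int hγ]
  exact ((S (hγ.toL1 γ) - T (hγ.toL1 γ)).norm_coe_le_norm t).trans (hST _)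

lemma IsT.ev_eq' {T : L1s →L[ℝ] C01} (hT : IsT T) (k0 : ℕ) (t : Set.Icc (0:ℝ) 1)
    (h : ∀ j, k0 ≤ j → wave j t = 0) {γ : ℝ → ℝ} (hγ : Integrable γ mu) :
    ev T t γ = ∫ x, γ x * (1 - GG k0 t x) ∂mu := by
  rw [ev_eq hγ, hT.eq k0 t h]
  apply integral_congr_ae
  filter_upwards [hγ.coeFn_toL1] with x hx
  rw [hx]

lemma IsT.ev_nonneg {T : L1s →L[ℝ] C01} (hT : IsT T) (t : Set.Icc (0:ℝ) 1)
    {γ : ℝ → ℝ} (hγ : Integrable γ mu) (h0 : ∀ x, 0 ≤ γ x) : 0 ≤ ev T t γ := by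
  rw [ev_eq hγ]
  apply hT.nonneg
  filter_upwards [hγ.coeFn_toL1] with x hx
  rw [hx]; exact h0 x

/-- Uniform integrability. -/
lemma unif_int {γ : ℝ → ℝ} (hγ : Integrable γ mu) :
    ∃ C : ℝ, 0 < C ∧ ∀ s, MeasurableSet s → mu.real s ≤ 1 / C → ∫ x in s, γ x ∂mu ≤ 1 / 2 := by
  have hfin : ∫⁻ x, ‖γ x‖ₑ ∂mu ≠ ⊤ := hγ.2.ne
  obtain ⟨δ, hδ, h⟩ := exists_pos_setLIntegral_lt_of_measure_lt hfin
    (ε := ENNReal.ofReal (1/2)) (by simp)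
  obtain ⟨C, hC⟩ : ∃ C : ℝ, 0 < C ∧ ENNReal.ofReal (1 / C) < δ := by
    obtain ⟨r, hr0, hr⟩ := ENNReal.lt_iff_exists_nnreal_btwn.1 hδ
    have hr0' : 0 < (r : ℝ) := by exact_mod_cast hr0
    refine ⟨1 / r, by positivity, ?_⟩
    rw [one_div_one_div, ENNReal.ofReal_coe_nnreal]; exact hr
  refine ⟨C, hC.1, fun s hs hms => ?_⟩
  have h1 : mu s < δ := by
    refine lt_of_le_of_lt ?_ hC.2
    rw [← ENNReal.ofReal_toReal (measure_ne_top mu s)]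
    exact ENNReal.ofReal_le_ofReal hms
  have h2 := h s h1
  have h3 : ‖∫ x in s, γ x ∂mu‖ₑ ≤ ENNReal.ofReal (1/2) :=
    (enorm_integral_le_lintegral_enorm _).trans h2.le
  rw [Real.enorm_eq_ofReal_abs, ENNReal.ofReal_le_ofReal_iff (by norm_num)] at h3
  exact (le_abs_self _).trans h3

/-- Effect of one full step. -/
lemma drop_lemma {l i q k0 k : ℕ} {C t x : ℝ} (hk : k0 ≤ k) (hl : pl k = l) (hi : pi' k = i)
    (hq : pq k = q) (hq1 : 1 ≤ q) (hw : ∀ j, k0 ≤ j → j < k → wave j t = 0) (hwk : wave k t = 1)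
    (hR : 1 / 2 ^ l ≤ RR k0 t / 2) (hC : 1 / 2 ^ q ≤ (1 / 4) * (2:ℝ) ^ (-(C + 1)))
    (hsum : ∑ j ∈ Finset.range k0, vv j t * II j x ≤ C + 1)
    (hI : ⌊(2:ℝ) ^ l * x⌋₊ = i) (hD : DD (k ^ 2) q x = 1) : 1 / 2 ≤ GG (k + 1) t x := by
  have hv : vv k t = 1 := by
    rw [vv, hwk, RR_const hk hw, hl, one_mul]
    apply min_eq_left
    rw [div_le_iff₀ (by positivity)] at hR
    linarith
  have hII : II k x = 1 := by rw [II, hl, hi, if_pos hI]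
  rw [GG, hv, hII, hq, hD]
  apply drop_val hq1 _ (GG_bd k t x).2
  rw [GG_const hk hw]
  refine hC.trans (le_trans ?_ (GG_lower k0 t x))
  have : (2:ℝ) ^ (-(C + 1)) ≤ 2 ^ (-∑ j ∈ Finset.range k0, vv j t * II j x) :=
    Real.rpow_le_rpow_of_exponent_le (by norm_num) (by linarith)
  linarith

/-- Existence of good dyadic points. -/
lemma exists_dyadic (t0 : Set.Icc (0:ℝ) 1) (k : ℕ) : ∃ n : ℕ, n < 2 ^ k ∧
    |(n:ℝ) / 2 ^ k - t0| ≤ 1 / 2 ^ k := by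
  have hp : (0:ℝ) < 2 ^ k := by positivity
  obtain ⟨t, h0, h1⟩ := t0
  rcases eq_or_lt_of_le h1 with rfl | h1
  · refine ⟨2 ^ k - 1, Nat.sub_lt (by positivity) (by norm_num), ?_⟩
    rw [Nat.cast_sub (Nat.one_le_two_pow)]
    push_cast
    have : ((2:ℝ) ^ k - 1) / 2 ^ k - 1 = -(1 / 2 ^ k) := by field_simp; ring
    rw [this, abs_neg, abs_of_pos (by positivity)]
  · refine ⟨⌊(2:ℝ) ^ k * t⌋₊, ?_, ?_⟩
    · rw [Nat.floor_lt (by positivity)]; push_cast; nlinarith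
    · have a1 := Nat.floor_le (a := (2:ℝ) ^ k * t) (by positivity)
      have a2 := Nat.lt_floor_add_one ((2:ℝ) ^ k * t)
      have : (⌊(2:ℝ) ^ k * t⌋₊ : ℝ) / 2 ^ k - t = (⌊(2:ℝ) ^ k * t⌋₊ - 2 ^ k * t) / 2 ^ k := by
        field_simp
      simp only
      rw [this, abs_div, abs_of_pos hp]
      gcongr
      rw [abs_le]; constructor <;> linarith

lemma exists_max (f : C01) : ∃ t, |f t| = ‖f‖ := by
  obtain ⟨t, -, ht⟩ := isCompact_univ.exists_isMaxOn (Set.univ_nonempty (α := Set.Icc (0:ℝ) 1))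
    (f := fun t => |f t|) (f.continuous.abs.continuousOn)
  refine ⟨t, le_antisymm (f.norm_coe_le_norm t) ?_⟩
  exact (ContinuousMap.norm_le _ (abs_nonneg _)).2 fun s => ht (Set.mem_univ s)

end
end NAaux

namespace NAaux
noncomputable section
open Filter Topology

lemma M_ge {T S : L1s →L[ℝ] C01} {M : ℝ} (hT : IsT T) (hM : ∀ h, ‖S h‖ ≤ M * ‖h‖)
    (hST : ∀ h, ‖S h - T h‖ ≤ (1/16) * ‖h‖) : 11 / 16 ≤ M := by
  have hi : Integrable (fun _ : ℝ => (1:ℝ)) mu := integrable_const _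
  have hone : ∫ _x, (1:ℝ) ∂mu = 1 := by simp
  set z : Set.Icc (0:ℝ) 1 := ⟨0, by simp⟩
  have h1 := hT.ev_eq' 0 z (fun j _ => wave_at_zero j) hi
  have h2 : ev T z (fun _ => 1) = 3 / 4 := by
    rw [h1]; simp [GG]; norm_num
  have h3 := ev_near hST z hi
  have h4 := ev_abs_le hM z hi
  simp only [abs_one, hone] at h3 h4
  have := abs_le.1 h3
  have := abs_le.1 h4
  linarith

lemma key {T S : L1s →L[ℝ] C01} {M : ℝ} (hT : IsT T) (hM : ∀ h, ‖S h‖ ≤ M * ‖h‖)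
    (hST : ∀ h, ‖S h - T h‖ ≤ (1/16) * ‖h‖) {k0 n l i q : ℕ} {C : ℝ} (hn : n < 2 ^ k0)
    (t1 : Set.Icc (0:ℝ) 1) (ht1 : (t1:ℝ) = n / 2 ^ k0) (hq1 : 1 ≤ q)
    (hC : 1 / 2 ^ q ≤ (1 / 4) * (2:ℝ) ^ (-(C + 1))) (hl : 1 / 2 ^ l < RR k0 t1 / 2)
    {γ : ℝ → ℝ} (hγ : Integrable γ mu) (h0 : ∀ x, 0 ≤ γ x)
    (hs : ∀ x, γ x ≠ 0 → ∑ j ∈ Finset.range k0, vv j t1 * II j x ≤ C ∧ ⌊(2:ℝ) ^ l * x⌋₊ = i) :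
    ev S t1 γ ≤ (M - (1/8) / 2 ^ q) * ∫ x, γ x ∂mu := by
  have hMg := M_ge hT hM hST
  apply le_of_forall_pos_le_add
  intro δ hδ
  obtain ⟨m0, hm0⟩ := weak_small hγ (2 ^ q) hδ
  set t2 : ℕ → Set.Icc (0:ℝ) 1 := fun k =>
    Set.projIcc 0 1 zero_le_one ((n:ℝ) / 2 ^ k0 + 1 / 2 ^ (k + 1)) with ht2
  have hlim : Tendsto t2 atTop (𝓝 t1) := by
    have e : t1 = Set.projIcc 0 1 zero_le_one ((n:ℝ) / 2 ^ k0 + 0) := by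
      rw [add_zero, ← ht1, Set.projIcc_val]
    rw [e]
    refine (continuous_projIcc.tendsto _).comp (tendsto_const_nhds.add ?_)
    have := (tendsto_pow_atTop_nhds_zero_of_lt_one (r := (1/2:ℝ)) (by norm_num) (by norm_num)).comp
      (tendsto_add_atTop_nat 1)
    refine this.congr fun k => ?_
    simp
  have hval : ∀ k, k0 ≤ k → (t2 k : ℝ) = n / 2 ^ k0 + 1 / 2 ^ (k + 1) := by
    intro k hk
    simp only [ht2]
    rw [Set.projIcc_of_mem zero_le_one (x := (n:ℝ) / 2 ^ k0 + 1 / 2 ^ (k + 1))]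
    refine ⟨by positivity, ?_⟩
    have a1 : (n:ℝ) + 1 ≤ 2 ^ k0 := by exact_mod_cast hn
    have a2 : (1:ℝ) / 2 ^ (k + 1) ≤ 1 / 2 ^ k0 := by
      apply one_div_le_one_div_of_le (by positivity)
      exact pow_le_pow_right₀ (by norm_num) (by omega)
    have a3 : ((n:ℝ) + 1) / 2 ^ k0 ≤ 1 := by rw [div_le_one (by positivity)]; exact a1
    rw [add_div] at a3
    linarith
  have hfreq : ∃ᶠ k in atTop, pl k = l ∧ pi' k = i ∧ pq k = q := by
    rw [frequently_atTop]
    intro a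
    obtain ⟨k, h1, h2⟩ := exists_idx l i q a
    exact ⟨k, h1, h2⟩
  have hval' : Tendsto (fun k => ((t2 k : Set.Icc (0:ℝ) 1) : ℝ)) atTop (𝓝 (t1:ℝ)) :=
    (continuous_subtype_val.tendsto _).comp hlim
  have hR : ∀ᶠ k in atTop, 1 / 2 ^ l ≤ RR k0 (t2 k) / 2 := by
    have : Tendsto (fun k => RR k0 (t2 k) / 2) atTop (𝓝 (RR k0 t1 / 2)) :=
      (((RR_cont k0).tendsto _).comp hval').div_const 2
    exact (this.eventually (lt_mem_nhds hl)).mono fun k hk => hk.le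
  have hV : ∀ᶠ k in atTop, ∑ j ∈ Finset.range k0, |vv j (t2 k) - vv j t1| ≤ 1 := by
    have : Tendsto (fun k => ∑ j ∈ Finset.range k0, |vv j (t2 k) - vv j t1|) atTop (𝓝 0) := by
      have := tendsto_finsetSum (Finset.range k0) (fun j _ =>
        ((((vv_cont j).tendsto _).comp hval').sub_const (vv j t1)).abs)
      simpa using this
    exact (this.eventually (gt_mem_nhds one_pos)).mono fun k hk => hk.le
  have hev : Tendsto (fun k => ev S (t2 k) γ) atTop (𝓝 (ev S t1 γ)) :=
    ((ev_cont S γ).tendsto t1).comp hlim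
  refine le_of_tendsto_of_frequently hev ?_
  refine (hfreq.and_eventually (hR.and (hV.and ((eventually_ge_atTop k0).and
    (eventually_ge_atTop m0))))).mono ?_
  rintro k ⟨⟨hkl, hki, hkq⟩, hRk, hVk, hk0, hkm⟩
  have htk := hval k hk0
  have hDm : Measurable (DD (k ^ 2) q) := DD_meas _ _
  have hDb : ∀ x, |DD (k ^ 2) q x| ≤ 1 := fun x => by
    rcases DD_cases (k ^ 2) q x with h | h <;> simp [h]
  have hDb' : ∀ x, |1 - DD (k ^ 2) q x| ≤ 1 := fun x => by
    rcases DD_cases (k ^ 2) q x with h | h <;> simp [h]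
  have hi1 : Integrable (fun x => γ x * DD (k ^ 2) q x) mu := integrable_mul_bdd hγ hDm hDb
  have hi2 : Integrable (fun x => γ x * (1 - DD (k ^ 2) q x)) mu :=
    integrable_mul_bdd hγ (measurable_const.sub hDm) hDb'
  have hp1 : ∀ x, 0 ≤ γ x * DD (k ^ 2) q x := fun x => mul_nonneg (h0 x) (by
    rcases DD_cases (k ^ 2) q x with h | h <;> simp [h])
  have hp2 : ∀ x, 0 ≤ γ x * (1 - DD (k ^ 2) q x) := fun x => mul_nonneg (h0 x) (by
    rcases DD_cases (k ^ 2) q x with h | h <;> simp [h])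
  have hweak := hm0 (k ^ 2) (hkm.trans (Nat.le_self_pow (by norm_num) k))
    (fun x => 2 ^ q * DD (k ^ 2) q x - 1) ((hDm.const_mul _).sub_const _)
    (fun x => by
      have : (1:ℝ) ≤ 2 ^ q := one_le_pow₀ (by norm_num)
      rcases DD_cases (k ^ 2) q x with h | h <;> simp [h, abs_le] <;> linarith)
    (fun s hs => orth_step q hs)
  have hsplit : ∫ x, γ x * (2 ^ q * DD (k ^ 2) q x - 1) ∂mu
      = 2 ^ q * (∫ x, γ x * DD (k ^ 2) q x ∂mu) - ∫ x, γ x ∂mu := by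
    rw [← integral_const_mul, ← integral_sub (hi1.const_mul _) hγ]
    congr 1; ext x; ring
  rw [hsplit] at hweak
  have hsum : ∫ x, γ x * (1 - DD (k ^ 2) q x) ∂mu
      = (∫ x, γ x ∂mu) - ∫ x, γ x * DD (k ^ 2) q x ∂mu := by
    rw [← integral_sub hγ hi1]; congr 1; ext x; ring
  have hadd : ev S (t2 k) γ = ev S (t2 k) (fun x => γ x * DD (k ^ 2) q x)
      + ev S (t2 k) (fun x => γ x * (1 - DD (k ^ 2) q x)) := by
    rw [← ev_add hi1 hi2]; congr 1; ext x; simp only [Pi.add_apply]; ring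
  have hE2 := (abs_le.1 (ev_abs_le hM (t2 k) hi2)).2
  have hN := (abs_le.1 (ev_near hST (t2 k) hi1)).2
  simp only [abs_of_nonneg (hp1 _), abs_of_nonneg (hp2 _)] at hE2 hN
  have hTT : ev T (t2 k) (fun x => γ x * DD (k ^ 2) q x)
      ≤ (1/2) * ∫ x, γ x * DD (k ^ 2) q x ∂mu := by
    rw [hT.ev_eq' (k + 1) (t2 k) (fun j hj => by rw [htk]; exact wave_gt hk0 hj) hi1,
      ← integral_const_mul]
    refine integral_mono (integrable_mul_bdd hi1 (one_sub_GG_meas _ _) (one_sub_GG_abs _ _))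
      (hi1.const_mul _) fun x => ?_
    simp only
    by_cases hg : γ x = 0
    · simp [hg]
    rcases DD_cases (k ^ 2) q x with h | h
    · simp [h]
    have hd : 1 / 2 ≤ GG (k + 1) (t2 k) x := by
      refine drop_lemma hk0 hkl hki hkq hq1 (fun j hj hj' => by rw [htk]; exact wave_lt hj hj')
        (by rw [htk]; exact wave_one hk0) hRk hC ?_ (hs x hg).2 h
      have : ∑ j ∈ Finset.range k0, vv j (t2 k) * II j x
          ≤ ∑ j ∈ Finset.range k0, (vv j t1 * II j x + |vv j (t2 k) - vv j t1|) := by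
        apply Finset.sum_le_sum
        intro j _
        have := le_abs_self (vv j (t2 k) - vv j t1)
        have := abs_nonneg (vv j (t2 k) - vv j t1)
        rcases II_cases j x with h | h <;> rw [h] <;> linarith
      rw [Finset.sum_add_distrib] at this
      linarith [(hs x hg).1]
    rw [h]
    nlinarith [h0 x]
  have hJ : 0 ≤ ∫ x, γ x * DD (k ^ 2) q x ∂mu := integral_nonneg hp1
  set J := ∫ x, γ x * DD (k ^ 2) q x ∂mu
  set I := ∫ x, γ x ∂mu
  have h2q : (1:ℝ) ≤ 2 ^ q := one_le_pow₀ (by norm_num)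
  have hJge : (I - δ) / 2 ^ q ≤ J := by
    rw [div_le_iff₀ (by positivity)]
    linarith [(abs_le.1 hweak).1]
  have hδq : δ / 2 ^ q ≤ δ := div_le_self hδ.le h2q
  have e1 : (I - δ) / 2 ^ q = I / 2 ^ q - δ / 2 ^ q := sub_div _ _ _
  have e2 : (M - (1/8) / 2 ^ q) * I = M * I - (1/8) * (I / 2 ^ q) := by ring
  have e3 : (1/8) * J ≤ (M - 9/16) * J := mul_le_mul_of_nonneg_right (by linarith) hJ
  have hE2' : ev S (t2 k) (fun x => γ x * (1 - DD (k ^ 2) q x)) ≤ M * I - M * J := by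
    rw [hsum] at hE2; linarith
  rw [e2, hadd]
  nlinarith

end
end NAaux

namespace NAaux
noncomputable section
open Filter Topology

lemma core_pos {T S : L1s →L[ℝ] C01} {M : ℝ} (hT : IsT T) (hM : ∀ h, ‖S h‖ ≤ M * ‖h‖)
    (hST : ∀ h, ‖S h - T h‖ ≤ (1/16) * ‖h‖) {γ : ℝ → ℝ} (hγ : Integrable γ mu)
    (h0 : ∀ x, 0 ≤ γ x) (hone : ∫ x, γ x ∂mu = 1) (t0 : Set.Icc (0:ℝ) 1)
    (hev : ev S t0 γ = M) : False := by
  have hMg := M_ge hT hM hST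
  obtain ⟨C, hC0, hCs⟩ := unif_int hγ
  obtain ⟨q, hq1, hq⟩ : ∃ q : ℕ, 1 ≤ q ∧ 1 / 2 ^ q ≤ (1 / 4) * (2:ℝ) ^ (-(C + 1)) := by
    have hpos : 0 < (1 / 4) * (2:ℝ) ^ (-(C + 1)) := by positivity
    obtain ⟨q, hq⟩ := exists_pow_lt_of_lt_one hpos (by norm_num : (1/2:ℝ) < 1)
    refine ⟨q + 1, by omega, le_trans ?_ hq.le⟩
    rw [one_div_pow]
    apply one_div_le_one_div_of_le (by positivity)
    exact pow_le_pow_right₀ (by norm_num) (by omega)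
  set c : ℝ := (1/8) / 2 ^ q with hc
  have hc0 : 0 < c := by positivity
  have hc1 : c ≤ 1/8 := div_le_self (by norm_num) (one_le_pow₀ (by norm_num))
  -- a dyadic point
  obtain ⟨k0, n, hn, t1, ht1, hev1⟩ : ∃ (k0 n : ℕ) (_ : n < 2 ^ k0) (t1 : Set.Icc (0:ℝ) 1),
      (t1:ℝ) = n / 2 ^ k0 ∧ M - c / 2 < ev S t1 γ := by
    have h1 : ∀ᶠ t in 𝓝 t0, M - c / 2 < ev S t γ :=
      ((ev_cont S γ).tendsto t0).eventually (lt_mem_nhds (by rw [hev]; linarith))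
    obtain ⟨ε, hε, hball⟩ := Metric.eventually_nhds_iff.1 h1
    obtain ⟨k, hk⟩ := exists_pow_lt_of_lt_one hε (by norm_num : (1/2:ℝ) < 1)
    obtain ⟨n, hn, hd⟩ := exists_dyadic t0 k
    have hmem : (n:ℝ) / 2 ^ k ∈ Set.Icc (0:ℝ) 1 := by
      refine ⟨by positivity, ?_⟩
      rw [div_le_one (by positivity)]
      exact_mod_cast hn.le
    refine ⟨k, n, hn, ⟨_, hmem⟩, rfl, hball ?_⟩
    rw [Subtype.dist_eq, Real.dist_eq]
    rw [one_div_pow] at hk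
    exact hd.trans_lt hk
  set W : ℝ → ℝ := fun x => ∑ j ∈ Finset.range k0, vv j t1 * II j x with hW
  have hWm : Measurable W := Finset.measurable_fun_sum _ fun j _ => (II_meas j).const_mul _
  have hIIi : ∀ j, Integrable (II j) mu := fun j => integrable_bdd (II_meas j) (C := 1) (fun x => by
    rcases II_cases j x with h | h <;> simp [h])
  have hWi : Integrable W mu := integrable_finsetSum _ fun j _ => (hIIi j).const_mul _
  have hW0 : ∀ x, 0 ≤ W x := fun x => Finset.sum_nonneg fun j _ => mul_nonneg (vv_nonneg _ _) (by
    rcases II_cases j x with h | h <;> simp [h])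
  have hW1 : ∫ x, W x ∂mu ≤ 1 := by
    rw [hW, integral_finsetSum _ fun j _ => (hIIi j).const_mul _]
    calc ∑ j ∈ Finset.range k0, ∫ x, vv j t1 * II j x ∂mu
        ≤ ∑ j ∈ Finset.range k0, vv j t1 / 2 ^ pl j := by
          apply Finset.sum_le_sum
          intro j _
          rw [integral_const_mul, div_eq_mul_one_div]
          exact mul_le_mul_of_nonneg_left (int_II j) (vv_nonneg _ _)
      _ = 1 - RR k0 t1 := sum_vv _ _
      _ ≤ 1 := by linarith [RR_pos k0 t1]
  set B : Set ℝ := {x | C ≤ W x} with hB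
  have hBm : MeasurableSet B := measurableSet_le measurable_const hWm
  have hBmu : mu.real B ≤ 1 / C := by
    have := mul_meas_ge_le_integral_of_nonneg (Eventually.of_forall hW0) hWi C
    rw [le_div_iff₀ hC0, mul_comm]
    exact this.trans hW1
  have hBint := hCs B hBm hBmu
  -- restrict to the complement of B
  set χ : ℝ → ℝ := Set.indicator Bᶜ (fun _ => 1) with hχ
  have hχm : Measurable χ := measurable_const.indicator hBm.compl
  have hχc : ∀ x, χ x = 0 ∨ χ x = 1 := fun x => by
    by_cases h : x ∈ Bᶜ <;> simp [hχ, h]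
  have hi1 : Integrable (fun x => γ x * χ x) mu :=
    integrable_mul_bdd hγ hχm (C := 1) fun x => by rcases hχc x with h | h <;> simp [h]
  have hi2 : Integrable (fun x => γ x * (1 - χ x)) mu :=
    integrable_mul_bdd hγ (measurable_const.sub hχm) (C := 1) fun x => by
      rcases hχc x with h | h <;> simp [h]
  have hp1 : ∀ x, 0 ≤ γ x * χ x := fun x => mul_nonneg (h0 x) (by
    rcases hχc x with h | h <;> simp [h])
  have hp2 : ∀ x, 0 ≤ γ x * (1 - χ x) := fun x => mul_nonneg (h0 x) (by
    rcases hχc x with h | h <;> simp [h])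
  have hs2 : ∫ x, γ x * (1 - χ x) ∂mu ≤ 1 / 2 := by
    refine le_of_eq_of_le ?_ hBint
    rw [← integral_indicator hBm]
    congr 1; ext x
    by_cases h : x ∈ B <;> simp [hχ, h]
  have hs12 : ∫ x, γ x * (1 - χ x) ∂mu = 1 - ∫ x, γ x * χ x ∂mu := by
    have := integral_sub hγ hi1
    rw [hone] at this
    rw [← this]; congr 1; ext x; ring
  have hadd : ev S t1 γ = ev S t1 (fun x => γ x * χ x) + ev S t1 (fun x => γ x * (1 - χ x)) := by
    rw [← ev_add hi1 hi2]; congr 1; ext x; simp only [Pi.add_apply]; ring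
  have hE2 := (abs_le.1 (ev_abs_le hM t1 hi2)).2
  simp only [abs_of_nonneg (hp2 _)] at hE2
  have hmain : (M - c) * ∫ x, γ x * χ x ∂mu < ev S t1 (fun x => γ x * χ x) := by
    rw [hs12] at hE2 hs2
    nlinarith
  -- pigeonhole over dyadic intervals
  obtain ⟨l, hl⟩ : ∃ l : ℕ, 1 / 2 ^ l < RR k0 t1 / 2 := by
    obtain ⟨l, hl⟩ := exists_pow_lt_of_lt_one (half_pos (RR_pos k0 t1)) (by norm_num : (1/2:ℝ) < 1)
    exact ⟨l, by rwa [one_div_pow] at hl⟩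
  set ρ : ℕ → ℝ → ℝ := fun i x => γ x * χ x * (if ⌊(2:ℝ) ^ l * x⌋₊ = i then 1 else 0) with hρ
  have hfm : ∀ i, Measurable fun x : ℝ => (if ⌊(2:ℝ) ^ l * x⌋₊ = i then (1:ℝ) else 0) := by
    intro i
    refine Measurable.ite ?_ measurable_const measurable_const
    exact (Nat.measurable_floor.comp (measurable_id.const_mul _)) (MeasurableSet.singleton i)
  have hρi : ∀ i, Integrable (ρ i) mu := fun i =>
    integrable_mul_bdd hi1 (hfm i) (C := 1) fun x => by split_ifs <;> simp
  have hρ0 : ∀ i x, 0 ≤ ρ i x := fun i x => mul_nonneg (hp1 x) (by split_ifs <;> simp)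
  have hsumρ : (fun x => γ x * χ x) =ᵐ[mu] ∑ i ∈ Finset.range (2 ^ l + 1), ρ i := by
    filter_upwards [ae_restrict_mem measurableSet_Icc] with x hx
    rw [Finset.sum_apply]
    simp only [hρ]
    rw [← Finset.mul_sum, Finset.sum_ite_eq, if_pos, mul_one]
    rw [Finset.mem_range, Nat.lt_succ_iff]
    apply Nat.floor_le_of_le
    push_cast
    have : (0:ℝ) < 2 ^ l := by positivity
    nlinarith [hx.2]
  rw [ev_congr hi1 hsumρ, ev_sum _ _ hρi, integral_congr_ae hsumρ] at hmain
  simp only [Finset.sum_apply] at hmain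
  rw [integral_finsetSum _ (fun i _ => hρi i), Finset.mul_sum] at hmain
  obtain ⟨i, -, hi⟩ := Finset.exists_lt_of_sum_lt hmain
  refine absurd hi (not_lt.2 ?_)
  refine key hT hM hST (i := i) hn t1 ht1 hq1 hq hl (hρi i) (hρ0 i) ?_
  intro x hx
  simp only [hρ] at hx
  constructor
  · have : χ x ≠ 0 := fun h => hx (by simp [h])
    by_contra hcon
    apply this
    have : x ∈ B := (not_le.1 hcon).le
    simp [hχ, this]
  · by_contra hcon
    exact hx (by simp [hcon])

lemma core {T S : L1s →L[ℝ] C01} {M : ℝ} (hT : IsT T) (hM : ∀ h, ‖S h‖ ≤ M * ‖h‖)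
    (hST : ∀ h, ‖S h - T h‖ ≤ (1/16) * ‖h‖) (g0 : L1s) (hg : ‖g0‖ = 1) (hSg : ‖S g0‖ = M) :
    False := by
  have hMg := M_ge hT hM hST
  obtain ⟨t0, ht0⟩ := exists_max (S g0)
  obtain ⟨g, hg1, hgt⟩ : ∃ g : L1s, ‖g‖ = 1 ∧ S g t0 = M := by
    rcases abs_cases (S g0 t0) with ⟨h, _⟩ | ⟨h, _⟩
    · exact ⟨g0, hg, by rw [← h, ht0, hSg]⟩
    · refine ⟨-g0, by rw [norm_neg, hg], ?_⟩
      rw [map_neg, ContinuousMap.neg_apply, ← h, ht0, hSg]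
  have hi : Integrable g mu := L1.integrable_coeFn g
  have hip : Integrable (fun x => max (g x) 0) mu := hi.pos_part
  have him : Integrable (fun x => max (-g x) 0) mu := hi.neg_part
  have himn : Integrable (fun x => -max (-g x) 0) mu := him.neg
  have hadd : ev S t0 g = ev S t0 (fun x => max (g x) 0) + ev S t0 (fun x => -max (-g x) 0) := by
    rw [← ev_add hip himn]; congr 1; ext x; simp only [Pi.add_apply]
    rcases le_total (g x) 0 with h | h
    · rw [max_eq_right h, max_eq_left (by linarith)]; ring
    · rw [max_eq_left h, max_eq_right (by linarith)]; ring
  have hneg : ∀ U : L1s →L[ℝ] C01, ev U t0 (fun x => -max (-g x) 0)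
      + ev U t0 (fun x => max (-g x) 0) = 0 := by
    intro U
    rw [← ev_add himn him, ← ev_zero (S := U) (t := t0)]
    congr 1; ext x; simp
  have hpp : ∀ x, 0 ≤ max (g x) 0 := fun x => le_max_right _ _
  have hpm : ∀ x, 0 ≤ max (-g x) 0 := fun x => le_max_right _ _
  have hsum : (∫ x, max (g x) 0 ∂mu) + ∫ x, max (-g x) 0 ∂mu = 1 := by
    rw [← hg1, L1.norm_eq_integral_norm, ← integral_add hip him]
    congr 1; ext x
    rw [Real.norm_eq_abs]
    rcases le_total (g x) 0 with h | h
    · rw [max_eq_right h, max_eq_left (by linarith), abs_of_nonpos h]; ring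
    · rw [max_eq_left h, max_eq_right (by linarith), abs_of_nonneg h]; ring
  rw [ev_coe, hgt] at hadd
  have a1 := (abs_le.1 (ev_abs_le hM t0 hip)).2
  have a2 := (abs_le.1 (ev_near hST t0 him)).1
  have a3 := hT.ev_nonneg t0 him hpm
  simp only [abs_of_nonneg (hpp _), abs_of_nonneg (hpm _)] at a1 a2
  have a4 := hneg S
  have a5 : 0 ≤ ∫ x, max (-g x) 0 ∂mu := integral_nonneg hpm
  have a6 : ∫ x, max (-g x) 0 ∂mu = 0 := by
    set I := ∫ x, max (-g x) 0 ∂mu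
    have : ∫ x, max (g x) 0 ∂mu = 1 - I := by linarith
    rw [this] at a1
    nlinarith
  have a7 : ∫ x, max (g x) 0 ∂mu = 1 := by linarith
  have a8 := (abs_le.1 (ev_abs_le hM t0 himn)).2
  simp only [abs_neg, abs_of_nonneg (hpm _), a6] at a8
  rw [a7] at a1
  exact core_pos hT hM hST hip hpp a7 t0 (by linarith)

end
end NAaux

namespace NAaux
noncomputable section
open Filter Topology

/-- Coordinate maps. -/
def i2 : L1s →L[ℝ] XCL :=
  ((WithLp.prodContinuousLinearEquiv 1 ℝ C01 L1s).symm : (C01 × L1s) →L[ℝ] XCL).comp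
    (ContinuousLinearMap.inr ℝ C01 L1s)
def i1 : C01 →L[ℝ] XCL :=
  ((WithLp.prodContinuousLinearEquiv 1 ℝ C01 L1s).symm : (C01 × L1s) →L[ℝ] XCL).comp
    (ContinuousLinearMap.inl ℝ C01 L1s)
def q1 : XCL →L[ℝ] C01 := WithLp.fstL 1 ℝ C01 L1s
def q2 : XCL →L[ℝ] L1s := WithLp.sndL 1 ℝ C01 L1s

lemma nrm (x : XCL) : ‖x‖ = ‖q1 x‖ + ‖q2 x‖ := WithLp.prod_norm_eq_of_L1 x
lemma q1_i1 (f : C01) : q1 (i1 f) = f := rfl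
lemma q2_i1 (f : C01) : q2 (i1 f) = 0 := rfl
lemma q1_i2 (f : L1s) : q1 (i2 f) = 0 := rfl
lemma q2_i2 (f : L1s) : q2 (i2 f) = f := rfl
lemma decomp (x : XCL) : x = i1 (q1 x) + i2 (q2 x) := by
  rw [← sub_eq_zero, ← norm_eq_zero, nrm]
  simp [q1_i1, q2_i1, q1_i2, q2_i2]
lemma nrm_i1 (f : C01) : ‖i1 f‖ = ‖f‖ := by rw [nrm, q1_i1, q2_i1, norm_zero, add_zero]
lemma nrm_i2 (f : L1s) : ‖i2 f‖ = ‖f‖ := by rw [nrm, q1_i2, q2_i2, norm_zero, zero_add]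

theorem main : ¬ Dense {T : XCL →L[ℝ] XCL | NormAttaining T} := by
  intro hd
  obtain ⟨T, hT⟩ := exists_T
  have hT : IsT T := hT
  set U : XCL →L[ℝ] XCL := (i1.comp T).comp q2 with hU
  obtain ⟨S, ⟨x, hx1, hx⟩, hSU⟩ := Metric.dense_iff.1 hd U (1/16) (by norm_num) |>.imp
    fun S h => (And.intro h.2 h.1)
  have hSU : ‖S - U‖ < 1/16 := (dist_eq_norm S U).symm.trans_lt (Metric.mem_ball.1 hSU)
  have hnear : ∀ y, ‖S y - U y‖ ≤ (1/16) * ‖y‖ := fun y => by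
    have := (S - U).le_opNorm y
    exact this.trans (mul_le_mul_of_nonneg_right hSU.le (norm_nonneg _))
  have hbd : ∀ y, ‖S y‖ ≤ ‖S‖ * ‖y‖ := S.le_opNorm
  set M := ‖S‖ with hMdef
  set A : L1s →L[ℝ] C01 := (q1.comp S).comp i2 with hA
  set B : L1s →L[ℝ] L1s := (q2.comp S).comp i2 with hB
  have hAB : ∀ h, ‖A h‖ + ‖B h‖ ≤ M * ‖h‖ := fun h => by
    have := hbd (i2 h)
    rw [nrm, nrm_i2] at this
    exact this
  have hABT : ∀ h, ‖A h - T h‖ + ‖B h‖ ≤ (1/16) * ‖h‖ := fun h => by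
    have := hnear (i2 h)
    rw [nrm, nrm_i2, map_sub, map_sub] at this
    have e1 : q1 (U (i2 h)) = T h := rfl
    have e2 : q2 (U (i2 h)) = 0 := rfl
    rw [e1, e2, sub_zero] at this
    exact this
  have hMg : 11 / 16 ≤ M := M_ge (S := A) hT
    (fun h => by linarith [hAB h, norm_nonneg (B h)])
    (fun h => by linarith [hABT h, norm_nonneg (B h)])
  set g := q2 x with hg
  have hf1 : ‖S (i1 (q1 x))‖ ≤ (1/16) * ‖q1 x‖ := by
    have := hnear (i1 (q1 x))
    have e : U (i1 (q1 x)) = 0 := by simp [hU, q2_i1]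
    rwa [e, sub_zero, nrm_i1] at this
  have hSx : M ≤ (1/16) * ‖q1 x‖ + ‖S (i2 g)‖ := by
    rw [← hx]
    conv_lhs => rw [decomp x, map_add]
    exact (norm_add_le _ _).trans (by linarith)
  have hSi : ‖S (i2 g)‖ = ‖A g‖ + ‖B g‖ := nrm _
  have hxn : ‖q1 x‖ + ‖g‖ = 1 := (nrm x).symm.trans hx1
  have hABg := hAB g
  have hq0 : ‖q1 x‖ = 0 := by
    have h1 : ‖g‖ = 1 - ‖q1 x‖ := by linarith
    rw [h1] at hABg
    nlinarith [norm_nonneg (q1 x)]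
  have hg1 : ‖g‖ = 1 := by linarith
  have hAg : ‖A g‖ + ‖B g‖ = M := by
    rw [hg1] at hABg; rw [hq0] at hSx; linarith
  have hAg0 : 0 < ‖A g‖ := by
    have := hABT g
    rw [hg1] at this
    linarith [norm_nonneg (A g - T g)]
  obtain ⟨y, hy1, hy⟩ := exists_dual_vector'' ℝ (B g)
  set u : C01 := ‖A g‖⁻¹ • A g with hu
  have hu1 : ‖u‖ = 1 := by
    rw [hu, norm_smul, norm_inv, norm_norm, inv_mul_cancel₀ hAg0.ne']
  set A' : L1s →L[ℝ] C01 := A + (y.comp B).smulRight u with hA'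
  have hA'a : ∀ h, A' h = A h + y (B h) • u := fun h => rfl
  have hyb : ∀ h, ‖y (B h) • u‖ ≤ ‖B h‖ := fun h => by
    rw [norm_smul, hu1, mul_one]
    exact (y.le_opNorm _).trans (mul_le_of_le_one_left (norm_nonneg _) hy1)
  refine core (S := A') (M := M) hT (fun h => ?_) (fun h => ?_) g hg1 ?_
  · rw [hA'a]
    exact (norm_add_le _ _).trans (by linarith [hyb h, hAB h])
  · have : A' h - T h = (A h - T h) + y (B h) • u := by rw [hA'a]; abel
    rw [this]
    exact (norm_add_le _ _).trans (by linarith [hyb h, hABT h])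
  · have : A' g = (‖A g‖ + ‖B g‖) • u := by
      have e : ‖A g‖ • u = A g := by
        rw [hu, smul_smul, mul_inv_cancel₀ hAg0.ne', one_smul]
      rw [hA'a, hy, add_smul, e]
      rfl
    rw [this, norm_smul, hu1, mul_one, hAg, Real.norm_eq_abs, abs_of_nonneg (by linarith)]

end
end NAaux


/-- For `X = C[0,1] ⊕₁ L₁[0,1]`, the set of norm-attaining operators `NA(X, X)` is not dense
in `L(X, X)`. -/
theorem normAttaining_not_dense_C01_L101 :
    ¬ Dense {T : XCL →L[ℝ] XCL | NormAttaining T} := by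
  exact NAaux.main
end

section
/- Let X₁ and X₂ be nontrivial real Banach spaces (each containing a nonzero vector), let X = X₁ ⊕₁ X₂ be their ℓ1-sum, and let Y be a strictly convex real Banach space. If the pair (X,Y) has the Bishop–Phelps–Bollobás property, then Y is uniformly convex. -/
open scoped ENNReal

/-- If `X = X₁ ⊕₁ X₂` is a nontrivial `ℓ₁`-sum, `Y` is strictly convex and `(X, Y)` has the
BPBp, then `Y` is uniformly convex. -/
theorem uniformConvex_of_bpbp_l1_sum_domain
    (X₁ X₂ Y : Type*)
    [NormedAddCommGroup X₁] [NormedSpace ℝ X₁] [CompleteSpace X₁] [Nontrivial X₁]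
    [NormedAddCommGroup X₂] [NormedSpace ℝ X₂] [CompleteSpace X₂] [Nontrivial X₂]
    [NormedAddCommGroup Y] [NormedSpace ℝ Y] [CompleteSpace Y] [StrictConvexSpace ℝ Y]
    (h : HasBPBp (WithLp 1 (X₁ × X₂)) Y) :
    UniformConvexSpace Y := by
  obtain ⟨η, hη, hB⟩ := h
  obtain ⟨e₁, he₁⟩ : ∃ e : X₁, ‖e‖ = 1 := exists_norm_eq _ zero_le_one
  obtain ⟨e₂, he₂⟩ : ∃ e : X₂, ‖e‖ = 1 := exists_norm_eq _ zero_le_one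
  have key1 : ∃ f : X₁ →L[ℝ] ℝ, ‖f‖ = 1 ∧ f e₁ = 1 := by
    obtain ⟨f, hf, hf'⟩ := exists_dual_vector ℝ e₁ (by rw [he₁]; norm_num)
    exact ⟨f, hf, by simpa [he₁] using hf'⟩
  have key2 : ∃ f : X₂ →L[ℝ] ℝ, ‖f‖ = 1 ∧ f e₂ = 1 := by
    obtain ⟨f, hf, hf'⟩ := exists_dual_vector ℝ e₂ (by rw [he₂]; norm_num)
    exact ⟨f, hf, by simpa [he₂] using hf'⟩
  obtain ⟨f₁, hf₁, hf₁e⟩ := key1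
  obtain ⟨f₂, hf₂, hf₂e⟩ := key2
  have hn : ∀ (a : X₁) (b : X₂), ‖(WithLp.toLp 1 (a, b) : WithLp 1 (X₁ × X₂))‖ = ‖a‖ + ‖b‖ := by
    intro a b
    exact WithLp.prod_norm_eq_of_L1 _
  refine ⟨fun ε hε => ?_⟩
  set r : ℝ := min (1 / 2) (ε / 6) with hr
  have hr0 : 0 < r := lt_min (by norm_num) (by linarith)
  have hr1 : r < 1 := lt_of_le_of_lt (min_le_left _ _) (by norm_num)
  have hr6 : 6 * r ≤ ε := by
    have := min_le_right (1 / 2) (ε / 6)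
    linarith
  refine ⟨2 * η r, by linarith [hη r ⟨hr0, hr1⟩], fun y₁ hy₁ y₂ hy₂ hd => ?_⟩
  by_contra! hlt
  let T : WithLp 1 (X₁ × X₂) →L[ℝ] Y :=
    ((f₁.smulRight y₁).coprod (f₂.smulRight y₂)).comp
      (WithLp.prodContinuousLinearEquiv 1 ℝ X₁ X₂).toContinuousLinearMap
  have hT : ∀ a b, T (WithLp.toLp 1 (a, b)) = f₁ a • y₁ + f₂ b • y₂ := by
    intro a b; simp [T]
  have hTn : ‖T‖ = 1 := by
    apply le_antisymm
    · refine T.opNorm_le_bound zero_le_one ?_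
      rintro ⟨a, b⟩
      rw [hT, hn]
      have h1 := f₁.le_opNorm a
      have h2 := f₂.le_opNorm b
      have h3 := norm_add_le (f₁ a • y₁) (f₂ b • y₂)
      rw [norm_smul, norm_smul, hy₁, hy₂] at h3
      rw [hf₁] at h1
      rw [hf₂] at h2
      linarith
    · have := T.le_opNorm (WithLp.toLp 1 (e₁, 0))
      rw [hT, hn] at this
      simpa [hf₁e, hy₁, he₁] using this
  have hh₁ : ‖(1 / 2 : ℝ) • e₁‖ = 1 / 2 := by rw [norm_smul, he₁]; norm_num
  have hh₂ : ‖(1 / 2 : ℝ) • e₂‖ = 1 / 2 := by rw [norm_smul, he₂]; norm_num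
  obtain ⟨S, x, hx, hS, hSx, hxx, hST⟩ := hB r ⟨hr0, hr1⟩ T
    (WithLp.toLp 1 ((1 / 2 : ℝ) • e₁, (1 / 2 : ℝ) • e₂)) hTn
    (by rw [hn, hh₁, hh₂]; norm_num)
    (by
      rw [hT, map_smul, map_smul, hf₁e, hf₂e]
      have : ((1 / 2 : ℝ) • (1 : ℝ)) • y₁ + ((1 / 2 : ℝ) • (1 : ℝ)) • y₂
          = (1 / 2 : ℝ) • (y₁ + y₂) := by simp
      rw [this, norm_smul, Real.norm_of_nonneg (by norm_num)]
      linarith)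
  obtain ⟨u, v⟩ := x
  rw [hn] at hx
  rw [← WithLp.toLp_sub, Prod.mk_sub_mk, hn] at hxx
  let P : X₁ → Y := fun a => S (WithLp.toLp 1 (a, 0))
  let Q : X₂ → Y := fun b => S (WithLp.toLp 1 (0, b))
  have hPle : ∀ a, ‖P a‖ ≤ ‖a‖ := by
    intro a
    have := S.le_opNorm (WithLp.toLp 1 (a, 0))
    rwa [hn, hS, norm_zero, add_zero, one_mul] at this
  have hQle : ∀ a, ‖Q a‖ ≤ ‖a‖ := by
    intro a
    have := S.le_opNorm (WithLp.toLp 1 (0, a))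
    rwa [hn, hS, norm_zero, zero_add, one_mul] at this
  have hPs : ∀ a b, P (a - b) = P a - P b := by
    intro a b
    simp only [P]
    rw [← map_sub, ← WithLp.toLp_sub, Prod.mk_sub_mk, sub_zero]
  have hQs : ∀ a b, Q (a - b) = Q a - Q b := by
    intro a b
    simp only [Q]
    rw [← map_sub, ← WithLp.toLp_sub, Prod.mk_sub_mk, sub_zero]
  have hPm : ∀ (c : ℝ) a, P (c • a) = c • P a := by
    intro c a
    simp only [P]
    rw [← map_smul, ← WithLp.toLp_smul, Prod.smul_mk, smul_zero]
  have hQm : ∀ (c : ℝ) a, Q (c • a) = c • Q a := by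
    intro c a
    simp only [Q]
    rw [← map_smul, ← WithLp.toLp_smul, Prod.smul_mk, smul_zero]
  have hsum : S (WithLp.toLp 1 (u, v)) = P u + Q v := by
    simp only [P, Q]
    rw [← map_add, ← WithLp.toLp_add, Prod.mk_add_mk, add_zero, zero_add]
  rw [hsum] at hSx
  have hPQ := norm_add_le (P u) (Q v)
  have hPu : ‖P u‖ = ‖u‖ := by linarith [hPle u, hQle v]
  have hQv : ‖Q v‖ = ‖v‖ := by linarith [hPle u, hQle v]
  have hray : SameRay ℝ (P u) (Q v) := sameRay_iff_norm_add.2 (by linarith)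
  have hdiff := hray.norm_sub
  rw [hPu, hQv] at hdiff
  have hu := abs_le.1 (abs_norm_sub_norm_le u ((1 / 2 : ℝ) • e₁))
  have hv := abs_le.1 (abs_norm_sub_norm_le v ((1 / 2 : ℝ) • e₂))
  rw [hh₁] at hu
  rw [hh₂] at hv
  have habs : ‖P u - Q v‖ ≤ ‖u - (1 / 2 : ℝ) • e₁‖ + ‖v - (1 / 2 : ℝ) • e₂‖ := by
    rw [hdiff, abs_le]
    constructor <;> linarith [hu.1, hu.2, hv.1, hv.2]
  have hP1 : ‖P e₁ - y₁‖ ≤ r := by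
    have := (S - T).le_opNorm (WithLp.toLp 1 (e₁, 0))
    rw [hn, ContinuousLinearMap.sub_apply, hT, hf₁e, map_zero, zero_smul, one_smul, add_zero,
      norm_zero, add_zero, he₁, mul_one] at this
    exact this.trans hST.le
  have hQ1 : ‖Q e₂ - y₂‖ ≤ r := by
    have := (S - T).le_opNorm (WithLp.toLp 1 (0, e₂))
    rw [hn, ContinuousLinearMap.sub_apply, hT, hf₂e, map_zero, zero_smul, one_smul, zero_add,
      norm_zero, zero_add, he₂, mul_one] at this
    exact this.trans hST.le
  have hPd := hPle (u - (1 / 2 : ℝ) • e₁)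
  have hQd := hQle (v - (1 / 2 : ℝ) • e₂)
  rw [hPs, hPm] at hPd
  rw [hQs, hQm] at hQd
  have hid : y₁ - y₂ = -(P e₁ - y₁) + (Q e₂ - y₂) + (2 : ℝ) • ((P u - Q v)
      - (P u - (1 / 2 : ℝ) • P e₁) + (Q v - (1 / 2 : ℝ) • Q e₂)) := by
    module
  have hfin : ‖y₁ - y₂‖ ≤ ‖P e₁ - y₁‖ + ‖Q e₂ - y₂‖ + 2 * (‖P u - Q v‖
      + ‖P u - (1 / 2 : ℝ) • P e₁‖ + ‖Q v - (1 / 2 : ℝ) • Q e₂‖) := by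
    rw [hid]
    refine (norm_add_le _ _).trans (add_le_add ((norm_add_le _ _).trans (by rw [norm_neg])) ?_)
    rw [norm_smul, Real.norm_of_nonneg (by norm_num : (0 : ℝ) ≤ 2)]
    refine mul_le_mul_of_nonneg_left ?_ (by norm_num)
    exact (norm_add_le _ _).trans (add_le_add (norm_sub_le _ _) le_rfl)
  linarith
end

section
/- Let ℓ₁² denote ℝ² equipped with the norm ‖(a,b)‖ = |a| + |b|, and let Y be a strictly convex real Banach space. If the pair (ℓ₁², Y) has the Bishop–Phelps–Bollobás property, then Y is uniformly convex. -/
open scoped ENNReal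

theorem l1sq_norm (v : PiLp 1 (fun _ : Fin 2 => ℝ)) : ‖v‖ = |v 0| + |v 1| := by
  rw [PiLp.norm_eq_of_L1]
  simp [Fin.sum_univ_two]

/-- If `Y` is strictly convex and `(ℓ₁², Y)` has the BPBp, then `Y` is uniformly convex. -/
theorem uniformConvex_of_bpbp_l1sq_domain
    (Y : Type*) [NormedAddCommGroup Y] [NormedSpace ℝ Y] [CompleteSpace Y]
    [StrictConvexSpace ℝ Y]
    (h : HasBPBp (PiLp 1 (fun _ : Fin 2 => ℝ)) Y) :
    UniformConvexSpace Y := by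
  obtain ⟨η, hη, hB⟩ := h
  refine ⟨fun ε hε => ?_⟩
  obtain ⟨e, he0, he1, he2⟩ : ∃ e : ℝ, 0 < e ∧ e ≤ 1 / 2 ∧ 2 * e ≤ ε :=
    ⟨min ε 1 / 2, by positivity, by linarith [min_le_right ε 1], by linarith [min_le_left ε 1]⟩
  have hemem : e ∈ Set.Ioo (0 : ℝ) 1 := ⟨he0, by linarith⟩
  refine ⟨η e, hη e hemem, fun x hx y hy hxy => ?_⟩
  by_contra! hlt
  let T : PiLp 1 (fun _ : Fin 2 => ℝ) →L[ℝ] Y :=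
    (PiLp.proj 1 (fun _ : Fin 2 => ℝ) 0 : PiLp 1 (fun _ : Fin 2 => ℝ) →L[ℝ] ℝ).smulRight x +
    (PiLp.proj 1 (fun _ : Fin 2 => ℝ) 1 : PiLp 1 (fun _ : Fin 2 => ℝ) →L[ℝ] ℝ).smulRight y
  have hT : ∀ v, T v = v 0 • x + v 1 • y := fun v => by simp [T]
  let a : PiLp 1 (fun _ : Fin 2 => ℝ) := WithLp.toLp 1 ![1, 0]
  let b : PiLp 1 (fun _ : Fin 2 => ℝ) := WithLp.toLp 1 ![0, 1]
  have ha : ‖a‖ = 1 := by simp [l1sq_norm, a]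
  have hb : ‖b‖ = 1 := by simp [l1sq_norm, b]
  have hTa : T a = x := by simp [hT, a]
  have hTb : T b = y := by simp [hT, b]
  have hTn : ‖T‖ = 1 := by
    apply le_antisymm
    · refine T.opNorm_le_bound zero_le_one fun v => ?_
      rw [hT, l1sq_norm, one_mul]
      refine (norm_add_le _ _).trans ?_
      simp [norm_smul, hx, hy]
    · have := T.le_opNorm a
      rwa [hTa, hx, ha, mul_one] at this
  let c : PiLp 1 (fun _ : Fin 2 => ℝ) := WithLp.toLp 1 ![1 / 2, 1 / 2]
  have hc0 : c 0 = 1 / 2 := by simp [c]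
  have hc1 : c 1 = 1 / 2 := by simp [c]
  have hc : ‖c‖ = 1 := by rw [l1sq_norm, hc0, hc1]; norm_num
  have hTc : 1 - η e < ‖T c‖ := by
    rw [hT, hc0, hc1, ← smul_add, norm_smul]
    norm_num
    have := hη e hemem
    linarith
  obtain ⟨S, z, hz, hS, hSz, hzc, hST⟩ := hB e hemem T c hTn hc hTc
  have hz0 : 0 < z 0 ∧ 0 < z 1 := by
    rw [l1sq_norm, PiLp.sub_apply, PiLp.sub_apply, hc0, hc1] at hzc
    have h0 := abs_nonneg (z 0 - 1 / 2)
    have h1 := abs_nonneg (z 1 - 1 / 2)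
    have h2 := neg_abs_le (z 0 - 1 / 2)
    have h3 := neg_abs_le (z 1 - 1 / 2)
    constructor <;> linarith
  have hsum : z 0 + z 1 = 1 := by
    rwa [l1sq_norm, abs_of_pos hz0.1, abs_of_pos hz0.2] at hz
  have hSab : S z = z 0 • S a + z 1 • S b := by
    rw [← map_smul, ← map_smul, ← map_add]
    congr 1
    ext i
    fin_cases i <;> simp [a, b]
  have hSa : ‖S a‖ ≤ 1 := by have := S.le_opNorm a; rwa [hS, ha, mul_one] at this
  have hSb : ‖S b‖ ≤ 1 := by have := S.le_opNorm b; rwa [hS, hb, mul_one] at this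
  have heq : S a = S b := by
    by_contra hne
    have := norm_combo_lt_of_ne hSa hSb hne hz0.1 hz0.2 hsum
    rw [← hSab, hSz] at this
    exact lt_irrefl _ this
  have h1 := (S - T).le_opNorm a
  have h2 := (S - T).le_opNorm b
  rw [ha, mul_one, ContinuousLinearMap.sub_apply, hTa] at h1
  rw [hb, mul_one, ContinuousLinearMap.sub_apply, hTb] at h2
  have h3 : x - y = (S b - y) - (S a - x) := by rw [heq]; abel
  have h4 := norm_sub_le (S b - y) (S a - x)
  rw [← h3] at h4
  linarith
end

section
/- There exists a reflexive real Banach space X (i.e. the canonical isometric embedding of X into its bidual X** is surjective) such that the pair (X,X) fails the Bishop–Phelps–Bollobás property. -/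
open scoped ENNReal

abbrev L2sp : Type := lp (fun _ : ℕ => ℝ) 2

lemma reflexive_iff (X : Type*) [NormedAddCommGroup X] [NormedSpace ℝ X] :
    Function.Surjective (NormedSpace.inclusionInDoubleDual ℝ X) ↔
      ∀ φ : StrongDual ℝ (StrongDual ℝ X), ∃ x : X, ∀ f : StrongDual ℝ X, φ f = f x := by
  constructor
  · intro h φ
    obtain ⟨x, rfl⟩ := h φ
    exact ⟨x, fun f => by rw [NormedSpace.dual_def]⟩
  · intro h φ
    obtain ⟨x, hx⟩ := h φ
    refine ⟨x, ?_⟩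
    ext f
    rw [NormedSpace.dual_def, hx]

lemma reflexive_hilbert (H : Type*) [NormedAddCommGroup H] [InnerProductSpace ℝ H]
    [CompleteSpace H] : Function.Surjective (NormedSpace.inclusionInDoubleDual ℝ H) := by
  rw [reflexive_iff]
  intro φ
  let ψ : StrongDual ℝ H := LinearMap.mkContinuous
    { toFun := fun x => φ (InnerProductSpace.toDual ℝ H x)
      map_add' := fun x y => by rw [map_add, map_add]
      map_smul' := fun c x => by
        rw [map_smulₛₗ, map_smulₛₗ]; simp } ‖φ‖ (fun x => by
      have h := φ.le_opNorm (InnerProductSpace.toDual ℝ H x)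
      rwa [LinearIsometryEquiv.norm_map] at h)
  refine ⟨(InnerProductSpace.toDual ℝ H).symm ψ, fun f => ?_⟩
  obtain ⟨y, rfl⟩ := (InnerProductSpace.toDual ℝ H).surjective f
  rw [InnerProductSpace.toDual_apply_apply, real_inner_comm, InnerProductSpace.toDual_symm_apply]
  rfl

lemma reflexive_equiv {A X : Type*} [NormedAddCommGroup A] [NormedSpace ℝ A]
    [NormedAddCommGroup X] [NormedSpace ℝ X] (e : A ≃L[ℝ] X)
    (hA : Function.Surjective (NormedSpace.inclusionInDoubleDual ℝ A)) :
    Function.Surjective (NormedSpace.inclusionInDoubleDual ℝ X) := by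
  rw [reflexive_iff] at hA ⊢
  intro φ
  obtain ⟨a, ha⟩ := hA (φ.comp
    ((ContinuousLinearMap.compL ℝ X A ℝ).flip (e.symm : X →L[ℝ] A)))
  refine ⟨e a, fun f => ?_⟩
  have h := ha (f.comp (e : A →L[ℝ] X))
  have h2 : (f.comp (e : A →L[ℝ] X)).comp (e.symm : X →L[ℝ] A) = f := by ext x; simp
  simp only [ContinuousLinearMap.comp_apply, ContinuousLinearMap.flip_apply,
    ContinuousLinearMap.compL_apply] at h
  rw [h2] at h
  simpa using h

lemma reflexive_prod {A B : Type*} [NormedAddCommGroup A] [NormedSpace ℝ A]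
    [NormedAddCommGroup B] [NormedSpace ℝ B]
    (hA : Function.Surjective (NormedSpace.inclusionInDoubleDual ℝ A))
    (hB : Function.Surjective (NormedSpace.inclusionInDoubleDual ℝ B)) :
    Function.Surjective (NormedSpace.inclusionInDoubleDual ℝ (A × B)) := by
  rw [reflexive_iff] at hA hB ⊢
  intro φ
  obtain ⟨a, ha⟩ := hA (φ.comp
    ((ContinuousLinearMap.compL ℝ (A × B) A ℝ).flip (ContinuousLinearMap.fst ℝ A B)))
  obtain ⟨b, hb⟩ := hB (φ.comp
    ((ContinuousLinearMap.compL ℝ (A × B) B ℝ).flip (ContinuousLinearMap.snd ℝ A B)))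
  refine ⟨(a, b), fun f => ?_⟩
  have h1 := ha (f.comp (ContinuousLinearMap.inl ℝ A B))
  have h2 := hb (f.comp (ContinuousLinearMap.inr ℝ A B))
  simp only [ContinuousLinearMap.comp_apply, ContinuousLinearMap.flip_apply,
    ContinuousLinearMap.compL_apply] at h1 h2
  have h3 : f = (f.comp (ContinuousLinearMap.inl ℝ A B)).comp (ContinuousLinearMap.fst ℝ A B)
      + (f.comp (ContinuousLinearMap.inr ℝ A B)).comp (ContinuousLinearMap.snd ℝ A B) := by
    apply ContinuousLinearMap.ext
    rintro ⟨x, y⟩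
    simp only [add_apply, ContinuousLinearMap.comp_apply,
      ContinuousLinearMap.coe_fst', ContinuousLinearMap.coe_snd',
      ContinuousLinearMap.inl_apply, ContinuousLinearMap.inr_apply]
    rw [← map_add]; simp
  calc φ f = φ ((f.comp (ContinuousLinearMap.inl ℝ A B)).comp (ContinuousLinearMap.fst ℝ A B))
      + φ ((f.comp (ContinuousLinearMap.inr ℝ A B)).comp (ContinuousLinearMap.snd ℝ A B)) := by
        rw [← map_add, ← h3]
    _ = f (a, 0) + f (0, b) := by rw [h1, h2]; simp
    _ = f (a, b) := by rw [← map_add]; simp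

lemma exists_D : ∃ D : L2sp →L[ℝ] L2sp, Function.Injective D ∧
    ∀ n : ℕ, D (lp.single 2 n (1 : ℝ)) = (1 / ((n : ℝ) + 1)) • lp.single 2 n (1 : ℝ) := by
  have hw : ∀ n : ℕ, 0 < 1 / ((n : ℝ) + 1) := fun n => Nat.one_div_pos_of_nat
  have hle : ∀ (x : L2sp) (n : ℕ), ‖1 / ((n : ℝ) + 1) * x n‖ ≤ ‖x n‖ := by
    intro x n
    rw [norm_mul, Real.norm_of_nonneg (hw n).le]
    refine mul_le_of_le_one_left (norm_nonneg _) ?_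
    rw [div_le_one (by positivity)]
    have : (0 : ℝ) ≤ n := n.cast_nonneg
    linarith
  have hmem : ∀ x : L2sp, Memℓp (fun n : ℕ => 1 / ((n : ℝ) + 1) * x n) 2 := fun x =>
    (lp.memℓp x).mono' (hle x)
  let D0 : L2sp →ₗ[ℝ] L2sp :=
    { toFun := fun x => ⟨fun n : ℕ => 1 / ((n : ℝ) + 1) * x n, hmem x⟩
      map_add' := fun x y => by
        apply lp.ext; funext n
        exact mul_add _ _ _
      map_smul' := fun c x => by
        apply lp.ext; funext n
        exact mul_left_comm _ _ _ }
  have hD0 : ∀ x n, D0 x n = 1 / ((n : ℝ) + 1) * x n := fun x n => rfl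
  refine ⟨D0.mkContinuous 1 (fun x => ?_), ?_, ?_⟩
  · rw [one_mul]
    exact lp.norm_mono (by norm_num) (hle x)
  · intro x y h
    apply lp.ext; funext n
    have h1 : D0 x n = D0 y n := congrArg (fun z : L2sp => z n) h
    rw [hD0, hD0] at h1
    exact mul_left_cancel₀ (hw n).ne' h1
  · intro n
    apply lp.ext; funext m
    change 1 / ((m : ℝ) + 1) * (Pi.single n (1 : ℝ) : ℕ → ℝ) m
      = 1 / ((n : ℝ) + 1) * (Pi.single n (1 : ℝ) : ℕ → ℝ) m
    by_cases h : m = n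
    · subst h; rfl
    · simp [Pi.single_eq_of_ne h]

/-- The auxiliary space: reflexive, strictly convex, not uniformly convex. -/
lemma exists_Y : ∃ (Y : Type) (_ : NormedAddCommGroup Y) (_ : NormedSpace ℝ Y)
    (_ : CompleteSpace Y),
    Function.Surjective (NormedSpace.inclusionInDoubleDual ℝ Y) ∧
    (∀ u v : Y, ‖u + v‖ = ‖u‖ + ‖v‖ → SameRay ℝ u v) ∧
    (∀ δ : ℝ, 0 < δ → ∃ y₁ y₂ : Y, ‖y₁‖ ≤ 1 ∧ ‖y₂‖ ≤ 1 ∧ 1 - δ < ‖(1 / 2 : ℝ) • (y₁ + y₂)‖ ∧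
      1 / 2 ≤ ‖y₁ - y₂‖) := by
  obtain ⟨D, hDi, hD⟩ := exists_D
  let ev : L2sp →L[ℝ] ℝ := lp.evalCLM ℝ (fun _ : ℕ => ℝ) 2 0
  let ι : L2sp →L[ℝ] WithLp 1 ((ℝ × L2sp) × L2sp) :=
    ((WithLp.prodContinuousLinearEquiv 1 ℝ (ℝ × L2sp) L2sp).symm :
      ((ℝ × L2sp) × L2sp) →L[ℝ] WithLp 1 ((ℝ × L2sp) × L2sp)).comp
      ((((2 : ℝ) • ev).prod (ContinuousLinearMap.id ℝ L2sp)).prod D)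
  have hιn : ∀ x, ‖ι x‖ = max (2 * |x 0|) ‖x‖ + ‖D x‖ := by
    intro x
    have h1 : ι x = WithLp.toLp 1 ((2 * x 0, x), D x) := rfl
    rw [h1, WithLp.prod_norm_eq_of_L1]
    simp [Prod.norm_def]
  have hanti : AntilipschitzWith 1 ι := by
    apply AddMonoidHomClass.antilipschitz_of_bound
    intro x
    rw [hιn]
    simp only [NNReal.coe_one, one_mul]
    have := le_max_right (2 * |x 0|) ‖x‖
    have := norm_nonneg (D x)
    linarith
  have hclo : IsClosed (Set.range ι) := hanti.isClosed_range ι.uniformContinuous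
  let e := ContinuousLinearMap.equivRange hanti.injective hclo
  have hen : ∀ x, ‖e x‖ = max (2 * |x 0|) ‖x‖ + ‖D x‖ := fun x => hιn x
  refine ⟨ι.range, inferInstance, inferInstance, ?_, ?_, ?_, ?_⟩
  · exact IsClosed.completeSpace_coe (hs := hclo)
  · exact reflexive_equiv e (reflexive_hilbert L2sp)
  · intro u v huv
    obtain ⟨x, rfl⟩ := e.surjective u
    obtain ⟨y, rfl⟩ := e.surjective v
    rw [← map_add, hen, hen, hen, map_add] at huv
    have h1 : max (2 * |(x + y) 0|) ‖x + y‖ ≤ max (2 * |x 0|) ‖x‖ + max (2 * |y 0|) ‖y‖ := by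
      apply max_le
      · have : (x + y) 0 = x 0 + y 0 := rfl
        rw [this]
        have := abs_add_le (x 0) (y 0)
        linarith [le_max_left (2 * |x 0|) ‖x‖, le_max_left (2 * |y 0|) ‖y‖]
      · linarith [le_max_right (2 * |x 0|) ‖x‖, le_max_right (2 * |y 0|) ‖y‖, norm_add_le x y]
    have h2 : ‖D x + D y‖ = ‖D x‖ + ‖D y‖ :=
      le_antisymm (norm_add_le _ _) (by linarith)
    have h3 : SameRay ℝ (D x) (D y) := sameRay_iff_norm_add.mpr h2
    have h4 : SameRay ℝ x y :=
      (Function.Injective.sameRay_map_iff (f := D) hDi).mp h3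
    exact h4.map (e : L2sp →ₗ[ℝ] ι.range)
  · intro δ hδ
    obtain ⟨n, hn⟩ := exists_nat_one_div_lt (lt_min hδ one_pos)
    have hn1 : 1 / ((n : ℝ) + 1) < δ := hn.trans_le (min_le_left _ _)
    set m := n + 1 with hm
    set w : ℝ := 1 / ((m : ℝ) + 1) with hw
    have hw0 : 0 < w := Nat.one_div_pos_of_nat
    have hwn : w ≤ 1 / ((n : ℝ) + 1) := by
      rw [hw, hm]; apply one_div_le_one_div_of_le (by positivity); push_cast; linarith
    have hwδ : w < δ := hwn.trans_lt hn1
    have hw1 : w < 1 := hwn.trans_lt (hn.trans_le (min_le_right _ _))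
    let a : L2sp := lp.single 2 0 (1 : ℝ)
    let b : L2sp := lp.single 2 m (1 : ℝ)
    have ha : ‖a‖ = 1 := by
      have := lp.norm_single (E := fun _ : ℕ => ℝ) (p := 2) (by norm_num) 0 (1 : ℝ)
      exact this.trans norm_one
    have hb : ‖b‖ = 1 := by
      have := lp.norm_single (E := fun _ : ℕ => ℝ) (p := 2) (by norm_num) m (1 : ℝ)
      exact this.trans norm_one
    have ha0 : a 0 = 1 := lp.single_apply_self (E := fun _ : ℕ => ℝ) 2 0 (1 : ℝ)
    have hb0 : b 0 = 0 :=
      lp.single_apply_ne (E := fun _ : ℕ => ℝ) 2 m (1 : ℝ) (Nat.succ_ne_zero n).symm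
    have hDa : ‖D a‖ = 1 := by
      have : D a = a := by rw [hD 0]; simp [a]
      rw [this, ha]
    have hDb : ‖D b‖ = w := by
      rw [hD m, norm_smul, Real.norm_of_nonneg hw0.le]
      change w * ‖b‖ = w
      rw [hb, mul_one]
    have hu : ‖e (a + b)‖ ≤ 3 + w := by
      rw [hen]
      have h1 : (a + b) 0 = 1 := by
        change a 0 + b 0 = 1
        rw [ha0, hb0, add_zero]
      have h2 : ‖a + b‖ ≤ 2 := (norm_add_le _ _).trans (by rw [ha, hb]; norm_num)
      have h3 : ‖D (a + b)‖ ≤ 1 + w := by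
        rw [map_add]; exact (norm_add_le _ _).trans (by rw [hDa, hDb])
      rw [h1, abs_one]
      have := max_le (le_refl ((2 : ℝ) * 1)) (by linarith : ‖a + b‖ ≤ 2 * 1)
      linarith
    have hv : ‖e (a - b)‖ ≤ 3 + w := by
      rw [hen]
      have h1 : (a - b) 0 = 1 := by
        change a 0 - b 0 = 1
        rw [ha0, hb0, sub_zero]
      have h2 : ‖a - b‖ ≤ 2 := (norm_sub_le _ _).trans (by rw [ha, hb]; norm_num)
      have h3 : ‖D (a - b)‖ ≤ 1 + w := by
        rw [map_sub]; exact (norm_sub_le _ _).trans (by rw [hDa, hDb])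
      rw [h1, abs_one]
      have := max_le (le_refl ((2 : ℝ) * 1)) (by linarith : ‖a - b‖ ≤ 2 * 1)
      linarith
    have hea : 3 ≤ ‖e a‖ := by
      rw [hen, hDa, ha0, abs_one]
      linarith [le_max_left ((2 : ℝ) * 1) ‖a‖]
    have heb : 1 ≤ ‖e b‖ := by
      rw [hen]
      linarith [le_max_right (2 * |b 0|) ‖b‖, norm_nonneg (D b)]
    have hpos : 0 < 3 + w := by linarith
    have hinv : ‖(3 + w)⁻¹‖ = (3 + w)⁻¹ := Real.norm_of_nonneg (by positivity)
    refine ⟨(3 + w)⁻¹ • e (a + b), (3 + w)⁻¹ • e (a - b), ?_, ?_, ?_, ?_⟩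
    · rw [norm_smul, hinv, inv_mul_le_iff₀ hpos]; linarith
    · rw [norm_smul, hinv, inv_mul_le_iff₀ hpos]; linarith
    · have : (1 / 2 : ℝ) • ((3 + w)⁻¹ • e (a + b) + (3 + w)⁻¹ • e (a - b)) = (3 + w)⁻¹ • e a := by
        rw [map_add, map_sub]; module
      rw [this, norm_smul, hinv, lt_inv_mul_iff₀ hpos]
      nlinarith
    · have : (3 + w)⁻¹ • e (a + b) - (3 + w)⁻¹ • e (a - b) = (3 + w)⁻¹ • (2 : ℝ) • e b := by
        rw [map_add, map_sub]; module
      rw [this, norm_smul, hinv, le_inv_mul_iff₀ hpos, norm_smul]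
      rw [Real.norm_of_nonneg (by norm_num : (0 : ℝ) ≤ 2)]
      linarith

/-- The `ℓ₁`-sum of `ℓ₁²` and `Y`. -/
abbrev XSp (Y : Type) : Type := WithLp 1 (WithLp 1 (ℝ × ℝ) × Y)

lemma exists_mk {Y : Type} [NormedAddCommGroup Y] [NormedSpace ℝ Y] (y₁ y₂ : Y) :
    ∃ (mk : ℝ → ℝ → Y → XSp Y) (T0 : XSp Y →ₗ[ℝ] XSp Y),
      (∀ a b y, ‖mk a b y‖ = |a| + |b| + ‖y‖) ∧
      (∀ a b y a' b' y', mk a b y + mk a' b' y' = mk (a + a') (b + b') (y + y')) ∧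
      (∀ a b y a' b' y', mk a b y - mk a' b' y' = mk (a - a') (b - b') (y - y')) ∧
      (∀ (c : ℝ) a b y, c • mk a b y = mk (c * a) (c * b) (c • y)) ∧
      (∀ x, ∃ a b y, x = mk a b y) ∧
      (∀ a b y, T0 (mk a b y) = mk 0 0 (a • y₁ + b • y₂)) := by
  refine ⟨fun a b y => WithLp.toLp 1 (WithLp.toLp 1 (a, b), y),
    { toFun := fun x => WithLp.toLp 1 (0, x.fst.fst • y₁ + x.fst.snd • y₂)
      map_add' := fun x x' => by
        change WithLp.toLp 1 ((0 : WithLp 1 (ℝ × ℝ)),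
            (x.fst.fst + x'.fst.fst) • y₁ + (x.fst.snd + x'.fst.snd) • y₂)
          = WithLp.toLp 1 ((0 : WithLp 1 (ℝ × ℝ)) + 0,
            (x.fst.fst • y₁ + x.fst.snd • y₂) + (x'.fst.fst • y₁ + x'.fst.snd • y₂))
        rw [add_zero]
        congr 2; module
      map_smul' := fun c x => by
        change WithLp.toLp 1 ((0 : WithLp 1 (ℝ × ℝ)),
            (c * x.fst.fst) • y₁ + (c * x.fst.snd) • y₂)
          = WithLp.toLp 1 (c • (0 : WithLp 1 (ℝ × ℝ)), c • (x.fst.fst • y₁ + x.fst.snd • y₂))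
        rw [smul_zero]
        congr 2; module },
    ?_, fun _ _ _ _ _ _ => rfl, fun _ _ _ _ _ _ => rfl, fun _ _ _ _ => rfl,
    fun x => ⟨x.fst.fst, x.fst.snd, x.snd, rfl⟩, fun _ _ _ => rfl⟩
  intro a b y
  rw [WithLp.prod_norm_eq_of_L1, WithLp.prod_norm_eq_of_L1]
  rfl

lemma not_bpbp {Y : Type} [NormedAddCommGroup Y] [NormedSpace ℝ Y]
    (hsc : ∀ u v : Y, ‖u + v‖ = ‖u‖ + ‖v‖ → SameRay ℝ u v)
    (hnu : ∀ δ : ℝ, 0 < δ → ∃ y₁ y₂ : Y, ‖y₁‖ ≤ 1 ∧ ‖y₂‖ ≤ 1 ∧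
      1 - δ < ‖(1 / 2 : ℝ) • (y₁ + y₂)‖ ∧ 1 / 2 ≤ ‖y₁ - y₂‖) :
    ¬ HasBPBp (XSp Y) (XSp Y) := by
  rintro ⟨η, hη, hB⟩
  have hε : (1 / 8 : ℝ) ∈ Set.Ioo (0 : ℝ) 1 := by constructor <;> norm_num
  obtain ⟨y₁, y₂, hy₁, hy₂, hmid, hdist⟩ := hnu (min (η (1 / 8)) 1) (lt_min (hη _ hε) one_pos)
  obtain ⟨mk, T0, hmk, hadd, hsub, hsmul, hsurj, hT0⟩ := exists_mk y₁ y₂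
  have hbd : ∀ x, ‖T0 x‖ ≤ 1 * ‖x‖ := by
    intro x
    obtain ⟨a, b, y, rfl⟩ := hsurj x
    rw [hT0, hmk, hmk, abs_zero]
    have h1 : ‖a • y₁ + b • y₂‖ ≤ |a| * ‖y₁‖ + |b| * ‖y₂‖ := by
      refine (norm_add_le _ _).trans ?_
      rw [norm_smul, norm_smul]; rfl
    have h2 := mul_le_of_le_one_right (abs_nonneg a) hy₁
    have h3 := mul_le_of_le_one_right (abs_nonneg b) hy₂
    linarith [norm_nonneg y]
  let T : XSp Y →L[ℝ] XSp Y := T0.mkContinuous 1 hbd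
  have hT : ∀ a b y, T (mk a b y) = mk 0 0 (a • y₁ + b • y₂) := fun a b y => hT0 a b y
  have hTle : ‖T‖ ≤ 1 := LinearMap.mkContinuous_norm_le _ zero_le_one _
  let x₀ : XSp Y := mk (1 / 2) (1 / 2) 0
  have hx₀ : ‖x₀‖ = 1 := by
    rw [hmk, norm_zero, abs_of_pos (by norm_num : (0 : ℝ) < 1 / 2)]; norm_num
  have hTx₀ : ‖T x₀‖ = ‖(1 / 2 : ℝ) • (y₁ + y₂)‖ := by
    rw [hT, hmk, smul_add]; simp
  have hTx₀pos : 0 < ‖T x₀‖ := by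
    rw [hTx₀]; linarith [min_le_right (η (1 / 8)) 1]
  have hTpos : 0 < ‖T‖ := by
    have := T.le_opNorm x₀
    rw [hx₀, mul_one] at this
    linarith
  set c := ‖T‖⁻¹ with hc
  have hc1 : 1 ≤ c := (one_le_inv₀ hTpos).mpr hTle
  have hcn : ‖c‖ = c := Real.norm_of_nonneg (by linarith)
  obtain ⟨S, x, hx, hS, hSx, hxx, hST⟩ := hB (1 / 8) hε (c • T) x₀
    (by rw [norm_smul, hcn, hc, inv_mul_cancel₀ hTpos.ne']) hx₀ (by
      rw [smul_apply, norm_smul, hcn]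
      have h1 : 1 - η (1 / 8) < ‖T x₀‖ := by
        rw [hTx₀]; linarith [min_le_left (η (1 / 8)) 1]
      nlinarith)
  obtain ⟨a, b, y, rfl⟩ := hsurj x
  have hSle : ∀ z, ‖S z‖ ≤ ‖z‖ := fun z => by
    have := S.le_opNorm z; rwa [hS, one_mul] at this
  rw [hmk] at hx
  rw [hsub, hmk] at hxx
  have ha : 0 < a := by
    have := neg_abs_le (a - 1 / 2)
    linarith [abs_nonneg (b - 1 / 2), norm_nonneg (y - 0)]
  have hb : 0 < b := by
    have := neg_abs_le (b - 1 / 2)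
    linarith [abs_nonneg (a - 1 / 2), norm_nonneg (y - 0)]
  rw [abs_of_pos ha, abs_of_pos hb] at hx
  obtain ⟨p₁, q₁, z₁, hz₁⟩ := hsurj (S (mk 1 0 0))
  obtain ⟨p₂, q₂, z₂, hz₂⟩ := hsurj (S (mk 0 1 0))
  have hu₁ : |p₁| + |q₁| + ‖z₁‖ ≤ 1 := by
    have := hSle (mk 1 0 0)
    rw [hz₁, hmk, hmk] at this; simpa using this
  have hu₂ : |p₂| + |q₂| + ‖z₂‖ ≤ 1 := by
    have := hSle (mk 0 1 0)
    rw [hz₂, hmk, hmk] at this; simpa using this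
  have hdec : mk a b y = a • mk 1 0 0 + b • mk 0 1 0 + mk 0 0 y := by
    rw [hsmul, hsmul, hadd, hadd]; simp
  have hsum : a + b ≤ |a * p₁ + b * p₂| + |a * q₁ + b * q₂| + ‖a • z₁ + b • z₂‖ := by
    rw [hdec, map_add, map_add, map_smul, map_smul, hz₁, hz₂, hsmul, hsmul, hadd] at hSx
    have h1 := norm_add_le (mk (a * p₁ + b * p₂) (a * q₁ + b * q₂) (a • z₁ + b • z₂)) (S (mk 0 0 y))
    have h2 := hSle (mk 0 0 y)
    rw [hSx, hmk] at h1
    rw [hmk, abs_zero] at h2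
    linarith
  have habs : ∀ s t : ℝ, |a * s + b * t| ≤ a * |s| + b * |t| := by
    intro s t
    refine (abs_add_le _ _).trans ?_
    rw [abs_mul, abs_mul, abs_of_pos ha, abs_of_pos hb]
  have hp := habs p₁ p₂
  have hq := habs q₁ q₂
  have hn₁ : ‖a • z₁‖ = a * ‖z₁‖ := by rw [norm_smul, Real.norm_of_nonneg ha.le]
  have hn₂ : ‖b • z₂‖ = b * ‖z₂‖ := by rw [norm_smul, Real.norm_of_nonneg hb.le]
  have hz := norm_add_le (a • z₁) (b • z₂)
  have hau₁ := mul_le_mul_of_nonneg_left hu₁ ha.le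
  have hbu₂ := mul_le_mul_of_nonneg_left hu₂ hb.le
  have hray : SameRay ℝ z₁ z₂ := by
    have h1 : SameRay ℝ (a • z₁) (b • z₂) := by
      apply hsc
      apply le_antisymm hz
      rw [hn₁, hn₂]
      linarith
    have h2 := (h1.pos_smul_left (inv_pos.mpr ha)).pos_smul_right (inv_pos.mpr hb)
    rwa [inv_smul_smul₀ ha.ne', inv_smul_smul₀ hb.ne'] at h2
  have he₁ : |p₁| + |q₁| + ‖z₁‖ = 1 := by
    apply le_antisymm hu₁
    by_contra h
    push Not at h
    have := mul_lt_mul_of_pos_left h ha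
    linarith
  have he₂ : |p₂| + |q₂| + ‖z₂‖ = 1 := by
    apply le_antisymm hu₂
    by_contra h
    push Not at h
    have := mul_lt_mul_of_pos_left h hb
    linarith
  have hd₁ : |p₁| + |q₁| + ‖z₁ - c • y₁‖ < 1 / 8 := by
    have h1 := (S - c • T).le_opNorm (mk 1 0 0)
    rw [sub_apply, smul_apply, hz₁, hT, hsmul, hsub,
      hmk, hmk] at h1
    simp at h1
    linarith
  have hd₂ : |p₂| + |q₂| + ‖z₂ - c • y₂‖ < 1 / 8 := by
    have h1 := (S - c • T).le_opNorm (mk 0 1 0)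
    rw [sub_apply, smul_apply, hz₂, hT, hsmul, hsub,
      hmk, hmk] at h1
    simp at h1
    linarith
  have hzz : ‖z₁ - z₂‖ < 1 / 8 := by
    rw [hray.norm_sub, abs_lt]
    constructor <;> linarith [abs_nonneg p₁, abs_nonneg p₂, abs_nonneg q₁, abs_nonneg q₂,
      norm_nonneg (z₁ - c • y₁), norm_nonneg (z₂ - c • y₂)]
  have hfin : ‖c • (y₁ - y₂)‖ ≤ ‖z₁ - z₂‖ + ‖z₁ - c • y₁‖ + ‖z₂ - c • y₂‖ := by
    have : c • (y₁ - y₂) = (z₁ - z₂) - (z₁ - c • y₁) + (z₂ - c • y₂) := by module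
    rw [this]
    linarith [norm_add_le ((z₁ - z₂) - (z₁ - c • y₁)) (z₂ - c • y₂),
      norm_sub_le (z₁ - z₂) (z₁ - c • y₁)]
  rw [norm_smul, hcn] at hfin
  have : 1 / 2 ≤ c * ‖y₁ - y₂‖ := by nlinarith
  linarith [abs_nonneg p₁, abs_nonneg p₂, abs_nonneg q₁, abs_nonneg q₂]

/-- There exists a reflexive real Banach space `X` such that the pair `(X, X)` fails the
Bishop–Phelps–Bollobás property. -/
theorem exists_reflexive_without_bpbp :
    ∃ (X : Type) (_ : NormedAddCommGroup X) (_ : NormedSpace ℝ X) (_ : CompleteSpace X),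
      Function.Surjective (NormedSpace.inclusionInDoubleDual ℝ X) ∧ ¬ HasBPBp X X := by
  obtain ⟨Y, i1, i2, i3, hr, hsc, hnu⟩ := exists_Y
  refine ⟨WithLp 1 (WithLp 1 (ℝ × ℝ) × Y), inferInstance, inferInstance, inferInstance, ?_,
    not_bpbp hsc hnu⟩
  refine reflexive_equiv (WithLp.prodContinuousLinearEquiv 1 ℝ (WithLp 1 (ℝ × ℝ)) Y).symm
    (reflexive_prod ?_ hr)
  exact reflexive_equiv (WithLp.prodContinuousLinearEquiv 1 ℝ ℝ ℝ).symm
    (reflexive_prod (reflexive_hilbert ℝ) (reflexive_hilbert ℝ))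
end
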